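/- Elliptic 6j-symbols via intertwining vectors: let k ≥ 1 and a, b, c, d ∈ ℤ with a − b = k − 2n and c − d = k − 2m for some integers 0 ≤ n, m ≤ k, with min(c,d) > k; assume r is irrational and u ∈ ℂ is such that every bracket appearing in a denominator (in the dual intertwining vectors along all paths from c to d and in R_n^m) is nonzero. Then Σ_{μ ∈ {−k,−k+2,…,k}} ψ*^{(k)}_μ(u)^d_c · ψ^{(k)}_μ(u)^a_b = R_n^m(α,β,γ,δ;k), where α = (−u+a−k+1)/2, β = (−u−a−k+1)/2, γ = (−u+c−k+1)/2, δ = (−u−c−k+1)/2. -/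

import Mathlib

noncomputable section

open Complex Finset

namespace Ell

/-- `x^s = exp(-iπ s /(r τ))`. -/
def xp (τ : ℂ) (r : ℝ) (s : ℂ) : ℂ :=
  Complex.exp (-Complex.I * (Real.pi : ℂ) * s / ((r : ℂ) * τ))

/-- `Θ_p(z) = ∏_{j ≥ 0} (1 - z p^j)(1 - p^{j+1}/z)(1 - p^{j+1})`. -/
def Theta (p z : ℂ) : ℂ :=
  ∏' j : ℕ, ((1 - z * p ^ j) * (1 - p ^ (j + 1) / z) * (1 - p ^ (j + 1)))

/-- The bracket `[u] = x^{u²/r - u} Θ_p(x^{2u})` with `p = x^{2r}`. -/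
def br (τ : ℂ) (r : ℝ) (u : ℂ) : ℂ :=
  xp τ r (u ^ 2 / (r : ℂ) - u) * Theta (xp τ r (2 * (r : ℂ))) (xp τ r (2 * u))

/-- Elliptic shifted factorial `[u]_n = ∏_{j=0}^{n-1} [u+j]`. -/
def brF (τ : ℂ) (r : ℝ) (u : ℂ) (n : ℕ) : ℂ :=
  ∏ j ∈ Finset.range n, br τ r (u + (j : ℂ))

/-- Elliptic binomial coefficient `C_n^k(α,β,γ)`. -/
def Cnk (τ : ℂ) (r : ℝ) (k n : ℕ) (α β γ : ℂ) : ℂ :=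
  brF τ r 1 k / (brF τ r 1 n * brF τ r 1 (k - n)) *
    (brF τ r (α - γ) n * brF τ r (α + γ + (k : ℂ) - (n : ℂ)) n *
      brF τ r (α - β) (k - n) * brF τ r (α + β + (n : ℂ)) (k - n)) /
    (brF τ r (β - γ + (n : ℂ) - (k : ℂ)) n * brF τ r (γ - β - (n : ℂ)) (k - n) *
      brF τ r (β + γ) k)

/-- The elliptic 6j-symbol `R_n^m(α,β,γ,δ;k)`. -/
def Rnm (τ : ℂ) (r : ℝ) (k n m : ℕ) (α β γ δ : ℂ) : ℂ :=
  ∑ j ∈ Finset.range (min n m + 1),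
    Cnk τ r n j α γ (β + (k : ℂ) - (n : ℂ)) * Cnk τ r (k - j) (m - j) β (γ + (j : ℂ)) δ

/-- Terminating very-well-poised elliptic hypergeometric sum with explicit
truncation `N`:  `Σ_{j=0}^N ([u₀+2j]/[u₀]) ([u₀]_j/[1]_j) ∏ᵢ [uᵢ]_j/[u₀+1-uᵢ]_j`. -/
def Vsum (τ : ℂ) (r : ℝ) (u₀ : ℂ) (us : List ℂ) (N : ℕ) : ℂ :=
  ∑ j ∈ Finset.range (N + 1),
    br τ r (u₀ + 2 * (j : ℂ)) / br τ r u₀ * (brF τ r u₀ j / brF τ r 1 j) *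
      (us.map fun ui => brF τ r ui j / brF τ r (u₀ + 1 - ui) j).prod

/-- "Every bracket appearing in a denominator of `C_n^k(·,β,γ)` is nonzero". -/
def CdenomNZ (τ : ℂ) (r : ℝ) (k n : ℕ) (β γ : ℂ) : Prop :=
  brF τ r 1 n ≠ 0 ∧ brF τ r 1 (k - n) ≠ 0 ∧
    brF τ r (β - γ + (n : ℂ) - (k : ℂ)) n ≠ 0 ∧
    brF τ r (γ - β - (n : ℂ)) (k - n) ≠ 0 ∧ brF τ r (β + γ) k ≠ 0

/-- "Every bracket appearing in a denominator of `R_n^m(α,β,γ,δ;k)` is nonzero". -/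
def RdenomNZ (τ : ℂ) (r : ℝ) (k n m : ℕ) (β γ δ : ℂ) : Prop :=
  ∀ j ≤ min n m,
    CdenomNZ τ r n j γ (β + (k : ℂ) - (n : ℂ)) ∧
      CdenomNZ τ r (k - j) (m - j) (γ + (j : ℂ)) δ

/-- Jacobi theta `ϑ₁(v|σ)`. -/
def th1 (v σ : ℂ) : ℂ :=
  2 * Complex.exp (2 * (Real.pi : ℂ) * Complex.I * σ / 8) *
    (∏' n : ℕ, (1 - Complex.exp (2 * (Real.pi : ℂ) * Complex.I * σ) ^ (n + 1))) *
    Complex.sin ((Real.pi : ℂ) * v) *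
    ∏' n : ℕ,
      (1 - 2 * Complex.exp (2 * (Real.pi : ℂ) * Complex.I * σ) ^ (n + 1) *
            Complex.cos (2 * (Real.pi : ℂ) * v) +
        Complex.exp (2 * (Real.pi : ℂ) * Complex.I * σ) ^ (2 * (n + 1)))

/-- Jacobi theta `ϑ₀(v|σ)`. -/
def th0 (v σ : ℂ) : ℂ :=
  -Complex.I * Complex.exp ((Real.pi : ℂ) * Complex.I * (v + σ / 4)) * th1 (v + σ / 2) σ

/-- Jacobi theta `ϑ₂(v|σ)`. -/
def th2 (v σ : ℂ) : ℂ := th1 (v + 1 / 2) σ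

/-- Jacobi theta `ϑ₃(v|σ)`. -/
def th3 (v σ : ℂ) : ℂ :=
  Complex.exp ((Real.pi : ℂ) * Complex.I * (v + σ / 4)) * th1 (v + (σ + 1) / 2) σ

/-- Intertwining vector component `ψ_ε(u)^a_b`, `ε ∈ {1, -1}`. -/
def psi (τ : ℂ) (r : ℝ) (u : ℂ) (ε : ℤ) (a b : ℤ) : ℂ :=
  if ε = 1 then th0 ((((a : ℂ) - (b : ℂ)) * u + (a : ℂ)) / (2 * (r : ℂ))) (τ / 2)
  else th3 ((((a : ℂ) - (b : ℂ)) * u + (a : ℂ)) / (2 * (r : ℂ))) (τ / 2)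

/-- The constant `C = x^{-r/4} e^{-iπ/4} τ^{1/2}`. -/
def Cc (τ : ℂ) (r : ℝ) : ℂ :=
  xp τ r (-(r : ℂ) / 4) * Complex.exp (-(Real.pi : ℂ) * Complex.I / 4) * τ ^ (1 / 2 : ℂ)

/-- Dual intertwining vector component `ψ*_ε(u)^a_b = -ε(a-b) C² ψ_{-ε}(u-1)^a_b/(2[b][u])`. -/
def psiStar (τ : ℂ) (r : ℝ) (u : ℂ) (ε : ℤ) (a b : ℤ) : ℂ :=
  -(ε : ℂ) * ((a : ℂ) - (b : ℂ)) * Cc τ r ^ 2 * psi τ r (u - 1) (-ε) a b /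
    (2 * br τ r (b : ℂ) * br τ r u)

/-- Sign attached to a boolean. -/
def sg (b : Bool) : ℤ := if b then 1 else -1

/-- Canonical path from `a`: up for `j ≤ n`, down afterwards. -/
def cpathZ (a n : ℤ) (j : ℕ) : ℤ := if (j : ℤ) ≤ n then a + j else a + 2 * n - j

/-- Admissibility: `a - b ∈ {-k, -k+2, …, k}`. -/
def adm (k : ℕ) (a b : ℤ) : Prop := (a - b).natAbs ≤ k ∧ (a - b - (k : ℤ)) % 2 = 0

instance (k : ℕ) (a b : ℤ) : Decidable (adm k a b) := by unfold adm; infer_instance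

/-- Fused intertwining vector component `ψ^{(k)}_μ(u)^a_b` (zero if `a,b` not admissible). -/
def psiF (τ : ℂ) (r : ℝ) (k : ℕ) (μ : ℤ) (u : ℂ) (a b : ℤ) : ℂ :=
  if adm k a b then
    ∑ ε ∈ Finset.univ.filter fun ε : Fin k → Bool => (∑ j, sg (ε j)) = μ,
      ∏ j : Fin k,
        psi τ r (u + (k : ℂ) - (((j : ℕ) + 1 : ℕ) : ℂ)) (sg (ε j))
          (cpathZ a (((k : ℤ) - (a - b)) / 2) (j : ℕ))
          (cpathZ a (((k : ℤ) - (a - b)) / 2) ((j : ℕ) + 1))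
  else 0

/-- Partial-sum path attached to a sign sequence `δ`, starting at `a`. -/
def spath (k : ℕ) (a : ℤ) (δ : Fin k → Bool) (j : ℕ) : ℤ :=
  a + ∑ i ∈ Finset.range j, if h : i < k then sg (δ ⟨i, h⟩) else 0

/-- Fused dual intertwining vector component `ψ*^{(k)}_μ(u)^b_a`
(sum over all admissible paths from `a` to `b`; zero if not admissible). -/
def psiStarF (τ : ℂ) (r : ℝ) (k : ℕ) (μ : ℤ) (u : ℂ) (b a : ℤ) : ℂ :=
  if adm k a b then
    ∑ δ ∈ Finset.univ.filter fun δ : Fin k → Bool => (∑ j, sg (δ j)) = b - a,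
      ∏ j : Fin k,
        psiStar τ r (u + (k : ℂ) - (((j : ℕ) + 1 : ℕ) : ℂ))
          (if ((j : ℕ) + 1 : ℤ) ≤ ((k : ℤ) + μ) / 2 then 1 else -1)
          (spath k a δ ((j : ℕ) + 1)) (spath k a δ (j : ℕ))
  else 0

/-- The `L`-matrix `L^{(k)}(a,b;c,d|u) = Σ_μ ψ*^{(k)}_μ(u)^d_c ψ^{(k)}_μ(u)^a_b`. -/
def Lk (τ : ℂ) (r : ℝ) (k : ℕ) (u : ℂ) (a b c d : ℤ) : ℂ :=
  ∑ i ∈ Finset.range (k + 1),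
    psiStarF τ r k ((k : ℤ) - 2 * (i : ℤ)) u d c * psiF τ r k ((k : ℤ) - 2 * (i : ℤ)) u a b

/-- Normalized face weight `W̄(a,b;d,c|u)` (arguments ordered (NW, NE; SW, SE)). -/
def Wb (τ : ℂ) (r : ℝ) (u : ℂ) (a b d c : ℤ) : ℂ :=
  if b = a + 1 ∧ d = a + 1 ∧ c = a + 2 then 1
  else if b = a - 1 ∧ d = a - 1 ∧ c = a - 2 then 1
  else if b = a + 1 ∧ d = a + 1 ∧ c = a then
    br τ r ((a : ℂ) - u) * br τ r 1 / (br τ r (a : ℂ) * br τ r (1 + u))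
  else if b = a - 1 ∧ d = a - 1 ∧ c = a then
    br τ r ((a : ℂ) + u) * br τ r 1 / (br τ r (a : ℂ) * br τ r (1 + u))
  else if b = a + 1 ∧ d = a - 1 ∧ c = a then
    br τ r ((a : ℂ) + 1) * br τ r u / (br τ r (a : ℂ) * br τ r (1 + u))
  else if b = a - 1 ∧ d = a + 1 ∧ c = a then
    br τ r ((a : ℂ) - 1) * br τ r u / (br τ r (a : ℂ) * br τ r (1 + u))
  else 0

/-- Sequence with prescribed endpoints `d`, `c` and free interior values `f`. -/
def seqI (k : ℕ) (d c : ℤ) (f : Fin (k - 1) → ℤ) (j : ℕ) : ℤ :=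
  if h0 : j = 0 then d
  else if hj : j < k then f ⟨j - 1, by omega⟩ else c

/-- Fused face weight `W^{(k,1)}(a,b;d,c|u)`. -/
def Wk1 (τ : ℂ) (r : ℝ) (k : ℕ) (u : ℂ) (a b d c : ℤ) : ℂ :=
  if adm k a b then
    ∑' f : Fin (k - 1) → ℤ,
      ∏ j ∈ Finset.range k,
        Wb τ r (u + (k : ℂ) - ((j : ℂ) + 1))
          (cpathZ a (((k : ℤ) - (a - b)) / 2) j)
          (cpathZ a (((k : ℤ) - (a - b)) / 2) (j + 1))
          (seqI k d c f j) (seqI k d c f (j + 1))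
  else 0

/-- Fused face weight `W^{(k,l)}(a,b;d,c|u)`. -/
def Wkl (τ : ℂ) (r : ℝ) (k l : ℕ) (u : ℂ) (a b d c : ℤ) : ℂ :=
  if adm l b c then
    ∑' g : Fin (l - 1) → ℤ,
      ∏ i ∈ Finset.range l,
        Wk1 τ r k (u - (l : ℂ) + ((i : ℂ) + 1))
          (seqI l a d g i) (cpathZ b (((l : ℤ) - (b - c)) / 2) i)
          (seqI l a d g (i + 1)) (cpathZ b (((l : ℤ) - (b - c)) / 2) (i + 1))
  else 0

/-- Eight-vertex weight `ā(u)`. -/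
def aw (τ : ℂ) (r : ℝ) (u : ℂ) : ℂ :=
  th2 (1 / (2 * (r : ℂ))) (τ / 2) * th2 (u / (2 * (r : ℂ))) (τ / 2) /
    (th2 0 (τ / 2) * th2 ((1 + u) / (2 * (r : ℂ))) (τ / 2))

/-- Eight-vertex weight `b̄(u)`. -/
def bw (τ : ℂ) (r : ℝ) (u : ℂ) : ℂ :=
  th2 (1 / (2 * (r : ℂ))) (τ / 2) * th1 (u / (2 * (r : ℂ))) (τ / 2) /
    (th2 0 (τ / 2) * th1 ((1 + u) / (2 * (r : ℂ))) (τ / 2))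

/-- Eight-vertex weight `c̄(u)`. -/
def cw (τ : ℂ) (r : ℝ) (u : ℂ) : ℂ :=
  th1 (1 / (2 * (r : ℂ))) (τ / 2) * th2 (u / (2 * (r : ℂ))) (τ / 2) /
    (th2 0 (τ / 2) * th1 ((1 + u) / (2 * (r : ℂ))) (τ / 2))

/-- Eight-vertex weight `d̄(u)`. -/
def dw (τ : ℂ) (r : ℝ) (u : ℂ) : ℂ :=
  -(th1 (1 / (2 * (r : ℂ))) (τ / 2) * th1 (u / (2 * (r : ℂ))) (τ / 2)) /
    (th2 0 (τ / 2) * th2 ((1 + u) / (2 * (r : ℂ))) (τ / 2))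

/-- The normalized eight-vertex `R`-matrix entry `R̄(u)_{(ε₁,ε₂),(ε₁',ε₂')}`. -/
def Rbar (τ : ℂ) (r : ℝ) (u : ℂ) (e1 e2 e1' e2' : ℤ) : ℂ :=
  if e1' = e1 ∧ e2' = e2 ∧ e1 = e2 then aw τ r u
  else if e1' = e1 ∧ e2' = e2 ∧ e1 = -e2 then bw τ r u
  else if e1' = e2 ∧ e2' = e1 ∧ e1 = -e2 then cw τ r u
  else if e1' = -e1 ∧ e2' = -e2 ∧ e1 = e2 then dw τ r u
  else 0

/-- Sklyanin standard-basis vector `v_+(z)`. -/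
def vp (τ z : ℂ) : ℂ := th3 (2 * z) (2 * τ) - th2 (2 * z) (2 * τ)

/-- Sklyanin standard-basis vector `v_-(z)`. -/
def vm (τ z : ℂ) : ℂ := th3 (2 * z) (2 * τ) + th2 (2 * z) (2 * τ)


/-- finite q-Pochhammer -/
def qP (p : ℂ) (n : ℕ) : ℂ := ∏ j ∈ Finset.range n, (1 - p ^ (j + 1))

lemma qP_succ (p : ℂ) (n : ℕ) : qP p (n + 1) = qP p n * (1 - p ^ (n + 1)) := by
  simp [qP, Finset.prod_range_succ]

lemma one_sub_pow_ne {p : ℂ} (hp : ‖p‖ < 1) (n : ℕ) : 1 - p ^ (n + 1) ≠ 0 := by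
  intro h
  have h1 : p ^ (n + 1) = 1 := by linear_combination -h
  have h2 : ‖p‖ ^ (n + 1) = 1 := by rw [← norm_pow, h1, norm_one]
  have h3 : ‖p‖ ^ (n + 1) < 1 := pow_lt_one₀ (norm_nonneg _) hp (by omega)
  linarith

lemma qP_ne {p : ℂ} (hp : ‖p‖ < 1) (n : ℕ) : qP p n ≠ 0 := by
  unfold qP
  exact Finset.prod_ne_zero_iff.mpr fun j _ => one_sub_pow_ne hp j

lemma gauss {p : ℂ} (hp : ‖p‖ < 1) (x : ℂ) (M : ℕ) :
    ∏ j ∈ Finset.range M, (1 + x * p ^ j) =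
      ∑ k ∈ Finset.range (M + 1),
        p ^ (k.choose 2) * (qP p M / (qP p k * qP p (M - k))) * x ^ k := by
  induction M with
  | zero => simp [qP]
  | succ M ih =>
    rw [Finset.prod_range_succ, ih, mul_add, mul_one, Finset.sum_mul]
    rw [Finset.sum_range_succ (n := M + 1), Finset.sum_range_succ' (n := M)]
    rw [Finset.sum_range_succ' (n := M) (f := fun k => p ^ (k.choose 2) * (qP p (M+1) / (qP p k * qP p (M + 1 - k))) * x ^ k)]
    rw [Finset.sum_range_succ (n := M) (f := fun k => p ^ (k.choose 2) * (qP p M / (qP p k * qP p (M - k))) * x ^ k * (x * p ^ M))]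
    have key : ∑ k ∈ Finset.range M,
        p ^ ((k+1).choose 2) * (qP p (M+1) / (qP p (k+1) * qP p (M + 1 - (k+1)))) * x ^ (k+1)
        = ∑ k ∈ Finset.range M, p ^ ((k+1).choose 2) * (qP p M / (qP p (k+1) * qP p (M - (k+1)))) * x ^ (k+1)
         + ∑ k ∈ Finset.range M, p ^ (k.choose 2) * (qP p M / (qP p k * qP p (M - k))) * x ^ k * (x * p ^ M) := by
      rw [← Finset.sum_add_distrib]
      refine Finset.sum_congr rfl fun k hk => ?_
      rw [Finset.mem_range] at hk
      obtain ⟨l, rfl⟩ : ∃ l, M = k + l + 1 := ⟨M - k - 1, by omega⟩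
      rw [show k + l + 1 + 1 - (k + 1) = l + 1 by omega, show k + l + 1 - (k + 1) = l by omega,
        show k + l + 1 - k = l + 1 by omega, Nat.choose_succ_succ' k 1, Nat.choose_one_right]
      rw [qP_succ p (k + l + 1), qP_succ p k, qP_succ p l]
      have h1 := qP_ne hp k
      have h2 := qP_ne hp l
      have h3 := one_sub_pow_ne hp k
      have h4 := one_sub_pow_ne hp l
      field_simp
      ring
    rw [key]
    have hM := qP_ne hp M
    have hM1 := qP_ne hp (M+1)
    have h0 : qP p 0 = 1 := by simp [qP]
    have hc : (M+1).choose 2 = M.choose 2 + M := by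
      rw [Nat.choose_succ_succ' M 1, Nat.choose_one_right]; ring
    simp only [Nat.sub_self, h0, hc, Nat.sub_zero, one_mul, mul_one, div_self hM, div_self hM1]
    generalize ∑ k ∈ Finset.range M, p ^ (k.choose 2) * (qP p M / (qP p k * qP p (M - k))) * x ^ k * (x * p ^ M) = S
    ring

lemma gauss_bilateral {σ : ℂ} (hσ : 0 < σ.im) (w : ℂ) (N : ℕ) :
    ∏ j ∈ Finset.range N, ((1 - cexp (2 * Real.pi * I * w) * cexp (2 * Real.pi * I * σ) ^ j) *
      (1 - cexp (2 * Real.pi * I * σ) ^ (j + 1) / cexp (2 * Real.pi * I * w))) =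
    ∑ k ∈ Finset.range (2 * N + 1),
      (qP (cexp (2 * Real.pi * I * σ)) (2 * N) / (qP (cexp (2 * Real.pi * I * σ)) k *
        qP (cexp (2 * Real.pi * I * σ)) (2 * N - k))) *
      jacobiTheta₂_term ((k : ℤ) - N) (w + 1 / 2 - σ / 2) σ := by
  set p := cexp (2 * Real.pi * I * σ) with hpdef
  set z := cexp (2 * Real.pi * I * w) with hzdef
  have hp : ‖p‖ < 1 := by
    have := UpperHalfPlane.norm_exp_two_pi_I_lt_one ⟨σ, hσ⟩
    simpa [hpdef] using this
  have hp0 : p ≠ 0 := Complex.exp_ne_zero _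
  have hz0 : z ≠ 0 := Complex.exp_ne_zero _
  have hg := gauss hp (-z / p ^ N) (2 * N)
  have hL : ∏ j ∈ Finset.range (2 * N), (1 + -z / p ^ N * p ^ j) =
      (-z) ^ N / p ^ (∑ j ∈ Finset.range N, (j + 1)) *
        ∏ j ∈ Finset.range N, ((1 - z * p ^ j) * (1 - p ^ (j + 1) / z)) := by
    rw [two_mul, Finset.prod_range_add, Finset.prod_mul_distrib, ← Finset.prod_range_reflect,
      ← Finset.prod_pow_eq_pow_sum]
    have e1 : ∏ j ∈ Finset.range N, (1 + -z / p ^ N * p ^ (N - 1 - j)) =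
        (-z) ^ N / (∏ j ∈ Finset.range N, p ^ (j + 1)) * ∏ j ∈ Finset.range N, (1 - p ^ (j + 1) / z) := by
      have : (-z) ^ N = ∏ j ∈ Finset.range N, (-z) := by simp
      rw [this, ← Finset.prod_div_distrib, ← Finset.prod_mul_distrib]
      refine Finset.prod_congr rfl fun j hj => ?_
      rw [Finset.mem_range] at hj
      obtain ⟨l, rfl⟩ : ∃ l, N = j + l + 1 := ⟨N - j - 1, by omega⟩
      rw [show j + l + 1 - 1 - j = l by omega]
      field_simp
      ring
    have e2 : ∏ j ∈ Finset.range N, (1 + -z / p ^ N * p ^ (N + j)) = ∏ j ∈ Finset.range N, (1 - z * p ^ j) := by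
      refine Finset.prod_congr rfl fun j hj => ?_
      rw [pow_add]; field_simp; ring
    rw [e1, e2]; ring
  rw [hL] at hg
  have hz1 : -z ≠ 0 := neg_ne_zero.mpr hz0
  have hc : (-z) ^ N / p ^ (∑ j ∈ Finset.range N, (j + 1)) ≠ 0 :=
    div_ne_zero (pow_ne_zero _ hz1) (pow_ne_zero _ hp0)
  apply mul_left_cancel₀ hc
  rw [hg, Finset.mul_sum]
  refine Finset.sum_congr rfl fun k hk => ?_
  have hT : p ^ (k.choose 2) * (-z / p ^ N) ^ k = (-z) ^ N / p ^ (∑ j ∈ Finset.range N, (j + 1)) *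
      jacobiTheta₂_term ((k : ℤ) - N) (w + 1 / 2 - σ / 2) σ := by
    have hzz : -z = cexp (2 * Real.pi * I * w + Real.pi * I) := by
      rw [Complex.exp_add, Complex.exp_pi_mul_I]; ring
    have hs : ((∑ j ∈ Finset.range N, (j + 1) : ℕ) : ℂ) = N * (N + 1) / 2 := by
      have : ∑ j ∈ Finset.range N, (j + 1) = (N + 1).choose 2 := by
        have := Finset.sum_range_id_mul_two (N + 1)
        rw [Finset.sum_range_succ'] at this
        rw [Nat.choose_two_right]
        omega
      rw [this, Nat.cast_choose_two]; push_cast; ring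
    have hk2 : ((k.choose 2 : ℕ) : ℂ) = k * (k - 1) / 2 := Nat.cast_choose_two ℂ k
    rw [hzz, hpdef, jacobiTheta₂_term]
    simp only [← Complex.exp_nat_mul, ← Complex.exp_sub, ← Complex.exp_add]
    rw [hs, hk2]
    congr 1
    push_cast
    ring
  calc _ = (p ^ (k.choose 2) * (-z / p ^ N) ^ k) * (qP p (2 * N) / (qP p k * qP p (2 * N - k))) := by ring
    _ = _ := by rw [hT]; ring

lemma norm_q_lt {σ : ℂ} (hσ : 0 < σ.im) : ‖cexp (2 * Real.pi * I * σ)‖ < 1 := by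
  have := UpperHalfPlane.norm_exp_two_pi_I_lt_one ⟨σ, hσ⟩
  simpa using this

lemma summable_qpow {p : ℂ} (hp : ‖p‖ < 1) (z : ℂ) : Summable fun j : ℕ => ‖-(z * p ^ j)‖ := by
  simp only [norm_neg, norm_mul, norm_pow]
  exact (summable_geometric_of_lt_one (norm_nonneg _) hp).mul_left _

lemma mult1 {p : ℂ} (hp : ‖p‖ < 1) (z : ℂ) : Multipliable fun j : ℕ => (1 - z * p ^ j) := by
  have := multipliable_one_add_of_summable (summable_qpow hp z)
  simpa [sub_eq_add_neg] using this

lemma mult2 {p : ℂ} (hp : ‖p‖ < 1) (z : ℂ) : Multipliable fun j : ℕ => (1 - p ^ (j + 1) / z) := by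
  have := mult1 hp (p / z)
  refine this.congr fun j => ?_
  rw [pow_succ]; ring

lemma mult3 {p : ℂ} (hp : ‖p‖ < 1) : Multipliable fun j : ℕ => (1 - p ^ (j + 1)) := by
  have := mult2 hp 1
  simpa using this

lemma qP_tendsto {p : ℂ} (hp : ‖p‖ < 1) :
    ∃ L : ℂ, L ≠ 0 ∧ Filter.Tendsto (qP p) Filter.atTop (nhds L) := by
  refine ⟨∏' j : ℕ, (1 - p ^ (j + 1)), ?_, (mult3 hp).tendsto_prod_tprod_nat⟩
  have := tprod_one_add_ne_zero_of_summable (f := fun j : ℕ => -(p * p ^ j)) (by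
    intro i
    have := one_sub_pow_ne hp i
    rwa [pow_succ', sub_eq_add_neg] at this) (summable_qpow hp p)
  simpa [sub_eq_add_neg, pow_succ'] using this

theorem theta_eq {σ : ℂ} (hσ : 0 < σ.im) (w : ℂ) :
    Theta (cexp (2 * Real.pi * I * σ)) (cexp (2 * Real.pi * I * w)) =
      jacobiTheta₂ (w + 1 / 2 - σ / 2) σ := by
  have hfin := gauss_bilateral hσ w
  have hp := norm_q_lt hσ
  set p := cexp (2 * Real.pi * I * σ) with hpdef
  set z := cexp (2 * Real.pi * I * w) with hzdef
  obtain ⟨L, hL0, hL⟩ := qP_tendsto hp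
  set T : ℤ → ℂ := fun n => jacobiTheta₂_term n (w + 1 / 2 - σ / 2) σ with hT
  have hm : Multipliable fun j : ℕ => ((1 - z * p ^ j) * (1 - p ^ (j + 1) / z) * (1 - p ^ (j + 1))) :=
    ((mult1 hp z).mul (mult2 hp z)).mul (mult3 hp)
  have h1 := hm.tendsto_prod_tprod_nat
  let f : ℕ → ℤ → ℂ := fun N n => if n.natAbs ≤ N then
    (qP p N * (qP p (2 * N) / (qP p ((N : ℤ) + n).toNat * qP p ((N : ℤ) - n).toNat))) * T n else 0
  have h2 : ∀ N : ℕ, ∏ j ∈ Finset.range N, ((1 - z * p ^ j) * (1 - p ^ (j + 1) / z) * (1 - p ^ (j + 1)))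
      = ∑' n, f N n := by
    intro N
    rw [Finset.prod_mul_distrib, hfin N, tsum_eq_sum (s := Finset.Icc (-(N : ℤ)) N)]
    · rw [Finset.sum_mul]
      refine Finset.sum_bij (fun k _ => (k : ℤ) - N) ?_ ?_ ?_ ?_
      · intro k hk
        simp only [Finset.mem_range, Finset.mem_Icc] at *
        omega
      · intro k1 _ k2 _ h
        omega
      · intro n hn
        simp only [Finset.mem_Icc] at hn
        exact ⟨(n + N).toNat, by simp only [Finset.mem_range]; omega, by omega⟩
      · intro k hk
        simp only [Finset.mem_range] at hk
        have e1 : ((N : ℤ) + ((k : ℤ) - N)).toNat = k := by omega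
        have e2 : ((N : ℤ) - ((k : ℤ) - N)).toNat = 2 * N - k := by omega
        have e3 : ((k : ℤ) - N).natAbs ≤ N := by omega
        simp only [f, e1, e2, e3, if_true]
        simp only [hT, qP]
        ring
    · intro n hn
      simp only [Finset.mem_Icc] at hn
      simp only [f]
      rw [if_neg (by omega)]
  simp only [h2] at h1
  have hbd : ∃ B : ℝ, ∀ n, ‖qP p n‖ ≤ B := by
    obtain ⟨B, hB⟩ := hL.norm.bddAbove_range
    exact ⟨B, fun n => hB ⟨n, rfl⟩⟩
  have hbd' : ∃ B : ℝ, ∀ n, ‖(qP p n)⁻¹‖ ≤ B := by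
    obtain ⟨B, hB⟩ := (hL.inv₀ hL0).norm.bddAbove_range
    exact ⟨B, fun n => hB ⟨n, rfl⟩⟩
  obtain ⟨B, hB⟩ := hbd
  obtain ⟨B', hB'⟩ := hbd'
  have hB0 : 0 ≤ B := (norm_nonneg _).trans (hB 0)
  have hB0' : 0 ≤ B' := (norm_nonneg _).trans (hB' 0)
  have hsum : Summable T := (summable_jacobiTheta₂_term_iff _ _).mpr hσ
  have h3 : Filter.Tendsto (fun N => ∑' n, f N n) Filter.atTop (nhds (∑' n, T n)) := by
    refine tendsto_tsum_of_dominated_convergence (bound := fun n => (B * (B * (B' * B'))) * ‖T n‖)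
      (hsum.norm.mul_left _) ?_ ?_
    · intro n
      have hA : Filter.Tendsto (fun N : ℕ => (qP p N * (qP p (2 * N) / (qP p ((N : ℤ) + n).toNat * qP p ((N : ℤ) - n).toNat))) * T n)
          Filter.atTop (nhds ((L * (L / (L * L))) * T n)) := by
        have t1 : Filter.Tendsto (fun N : ℕ => 2 * N) Filter.atTop Filter.atTop :=
          Filter.tendsto_atTop_mono (fun N => by show N ≤ 2 * N; omega) Filter.tendsto_id
        have t2 : Filter.Tendsto (fun N : ℕ => ((N : ℤ) + n).toNat) Filter.atTop Filter.atTop := by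
          refine Filter.tendsto_atTop.mpr fun b => ?_
          filter_upwards [Filter.eventually_ge_atTop (b + n.natAbs)] with N hN
          omega
        have t3 : Filter.Tendsto (fun N : ℕ => ((N : ℤ) - n).toNat) Filter.atTop Filter.atTop := by
          refine Filter.tendsto_atTop.mpr fun b => ?_
          filter_upwards [Filter.eventually_ge_atTop (b + n.natAbs)] with N hN
          omega
        exact (hL.mul ((hL.comp t1).div ((hL.comp t2).mul (hL.comp t3)) (mul_ne_zero hL0 hL0))).mul_const _
      have hLL : (L * (L / (L * L))) * T n = T n := by field_simp
      rw [hLL] at hA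
      refine hA.congr' ?_
      filter_upwards [Filter.eventually_ge_atTop n.natAbs] with N hN
      simp only [f, if_pos hN]
    · refine Filter.Eventually.of_forall fun N n => ?_
      simp only [f]
      split_ifs
      · rw [norm_mul, norm_mul, div_eq_mul_inv, mul_inv, norm_mul, norm_mul]
        gcongr
        · exact hB _
        · exact hB _
        · exact hB' _
        · exact hB' _
      · rw [norm_zero]; positivity
  exact tendsto_nhds_unique h1 h3

lemma theta_split {p : ℂ} (hp : ‖p‖ < 1) {z : ℂ} (hz : z ≠ 0) :
    Theta p z = (1 - z) * (∏' n : ℕ, (1 - 2 * p ^ (n + 1) * ((z + z⁻¹) / 2) + p ^ (2 * (n + 1)))) *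
      (∏' n : ℕ, (1 - p ^ (n + 1))) := by
  unfold Theta
  have hm1 : Multipliable fun j : ℕ => (1 - z * p ^ (j + 1)) := by
    refine (mult1 hp (z * p)).congr fun j => ?_
    rw [pow_succ]; ring
  have h2 : ∏' n : ℕ, (1 - 2 * p ^ (n + 1) * ((z + z⁻¹) / 2) + p ^ (2 * (n + 1))) =
      (∏' j : ℕ, (1 - z * p ^ (j + 1))) * ∏' j : ℕ, (1 - p ^ (j + 1) / z) := by
    rw [← Multipliable.tprod_mul hm1 (mult2 hp z)]
    refine tprod_congr fun n => ?_
    rw [two_mul (n + 1), pow_add p (n + 1)]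
    field_simp
    ring
  have h3 : ∏' j : ℕ, (1 - z * p ^ j) = (1 - z * p ^ 0) * ∏' j : ℕ, (1 - z * p ^ (j + 1)) :=
    tprod_eq_zero_mul' (f := fun j : ℕ => (1 - z * p ^ j)) hm1
  rw [Multipliable.tprod_mul ((mult1 hp z).mul (mult2 hp z)) (mult3 hp),
    Multipliable.tprod_mul (mult1 hp z) (mult2 hp z), h3, h2, pow_zero, mul_one]
  ring

lemma th1_eq {σ : ℂ} (hσ : 0 < σ.im) (v : ℂ) :
    th1 v σ = I * cexp (Real.pi * I * σ / 4) * cexp (-(Real.pi * I * v)) *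
      jacobiTheta₂ (v + 1 / 2 - σ / 2) σ := by
  have hz : cexp (2 * Real.pi * I * v) ≠ 0 := Complex.exp_ne_zero _
  have hcos : Complex.cos (2 * Real.pi * v) = (cexp (2 * Real.pi * I * v) + (cexp (2 * Real.pi * I * v))⁻¹) / 2 := by
    rw [Complex.cos, ← Complex.exp_neg]; ring_nf
  have hsin : 2 * Complex.sin (Real.pi * v) = I * cexp (-(Real.pi * I * v)) * (1 - cexp (2 * Real.pi * I * v)) := by
    rw [Complex.sin, mul_assoc I, mul_sub, ← Complex.exp_add, mul_one]
    have e1 : -(Real.pi * v : ℂ) * I = -(Real.pi * I * v) := by ring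
    have e2 : (Real.pi * v : ℂ) * I = -(Real.pi * I * v) + 2 * Real.pi * I * v := by ring
    rw [e1, e2]; ring
  have e3 : cexp (2 * Real.pi * I * σ / 8) = cexp (Real.pi * I * σ / 4) := by ring_nf
  rw [← theta_eq hσ v, theta_split (norm_q_lt hσ) hz, th1, hcos, e3]
  generalize (∏' n : ℕ, (1 - cexp (2 * Real.pi * I * σ) ^ (n + 1))) = P1
  generalize (∏' n : ℕ, (1 - 2 * cexp (2 * Real.pi * I * σ) ^ (n + 1) * ((cexp (2 * Real.pi * I * v) + (cexp (2 * Real.pi * I * v))⁻¹) / 2) + cexp (2 * Real.pi * I * σ) ^ (2 * (n + 1)))) = P2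
  linear_combination (cexp (Real.pi * I * σ / 4) * P1 * P2) * hsin

lemma th3_eq {σ : ℂ} (hσ : 0 < σ.im) (v : ℂ) : th3 v σ = jacobiTheta₂ v σ := by
  rw [th3, th1_eq hσ, show v + (σ + 1) / 2 + 1 / 2 - σ / 2 = v + 1 by ring, jacobiTheta₂_add_left]
  have : cexp (Real.pi * I * (v + σ / 4)) * (I * cexp (Real.pi * I * σ / 4) * cexp (-(Real.pi * I * (v + (σ + 1) / 2)))) = 1 := by
    have h : cexp (-(Real.pi / 2 * I)) = -I := by rw [Complex.exp_neg, Complex.exp_pi_div_two_mul_I]; simp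
    calc _ = I * (cexp (Real.pi * I * (v + σ / 4)) * cexp (Real.pi * I * σ / 4) * cexp (-(Real.pi * I * (v + (σ + 1) / 2)))) := by ring
      _ = I * cexp (-(Real.pi / 2 * I)) := by rw [← Complex.exp_add, ← Complex.exp_add]; ring_nf
      _ = 1 := by rw [h]; simp
  linear_combination jacobiTheta₂ v σ * this

lemma th0_eq {σ : ℂ} (hσ : 0 < σ.im) (v : ℂ) : th0 v σ = jacobiTheta₂ (v + 1 / 2) σ := by
  rw [th0, th1_eq hσ, show v + σ / 2 + 1 / 2 - σ / 2 = v + 1 / 2 by ring]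
  have : cexp (Real.pi * I * (v + σ / 4)) * (cexp (Real.pi * I * σ / 4) * cexp (-(Real.pi * I * (v + σ / 2)))) = 1 := by
    rw [← Complex.exp_add, ← Complex.exp_add, ← Complex.exp_zero]; ring_nf
  linear_combination jacobiTheta₂ (v + 1 / 2) σ * this - jacobiTheta₂ (v + 1 / 2) σ * cexp (Real.pi * I * (v + σ / 4)) * (cexp (Real.pi * I * σ / 4) * cexp (-(Real.pi * I * (v + σ / 2)))) * I_mul_I

/-- term of the odd theta series -/
def Jt (τ v : ℂ) (n : ℤ) : ℂ :=
  cexp (Real.pi * I * n + Real.pi * I * (n + 1 / 2) ^ 2 * τ + 2 * Real.pi * I * (n + 1 / 2) * v)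

def J (τ v : ℂ) : ℂ := ∑' n : ℤ, Jt τ v n

lemma Jt_eq (τ v : ℂ) (n : ℤ) : Jt τ v n = cexp (Real.pi * I * τ / 4 + Real.pi * I * v) *
    jacobiTheta₂_term n (v + τ / 2 + 1 / 2) τ := by
  rw [Jt, jacobiTheta₂_term, ← Complex.exp_add]
  ring_nf

lemma J_eq (τ v : ℂ) : J τ v = cexp (Real.pi * I * τ / 4 + Real.pi * I * v) *
    jacobiTheta₂ (v + τ / 2 + 1 / 2) τ := by
  rw [J, jacobiTheta₂, ← tsum_mul_left]
  exact tsum_congr fun n => Jt_eq τ v n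

lemma Jt_summable {τ : ℂ} (hτ : 0 < τ.im) (v : ℂ) : Summable (Jt τ v) := by
  have := ((summable_jacobiTheta₂_term_iff (v + τ / 2 + 1 / 2) τ).mpr hτ).mul_left
    (cexp (Real.pi * I * τ / 4 + Real.pi * I * v))
  exact this.congr fun n => (Jt_eq τ v n).symm

lemma J_neg (τ v : ℂ) : J τ (-v) = - J τ v := by
  rw [J, J, ← (Equiv.subLeft (-1 : ℤ)).tsum_eq, ← tsum_neg]
  refine tsum_congr fun n => ?_
  simp only [Equiv.subLeft_apply, Jt]
  have : ∀ x : ℂ, -cexp x = cexp (x + -(Real.pi * I)) := by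
    intro x; rw [Complex.exp_add, Complex.exp_neg, Complex.exp_pi_mul_I]; norm_num
  rw [this, Complex.exp_eq_exp_iff_exists_int]
  refine ⟨-n, ?_⟩
  push_cast
  ring

lemma br_eq {τ : ℂ} (hτ : 0 < τ.im) {r : ℝ} (hr : 0 < r) (u : ℂ) :
    br τ r u = (-I * τ) ^ (1 / 2 : ℂ) * (I * cexp (Real.pi * I / (4 * τ))) * J τ (-(u / r)) := by
  have hτ0 : τ ≠ 0 := by rintro rfl; simp at hτ
  have hr0 : (r : ℂ) ≠ 0 := by exact_mod_cast hr.ne'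
  have him : 0 < (-1 / τ).im := by
    rw [neg_div, neg_im, one_div, inv_im, neg_div, neg_neg]
    exact div_pos hτ (normSq_pos.mpr hτ0)
  have hA : (-I * τ) ^ (1 / 2 : ℂ) ≠ 0 := by
    rw [Complex.cpow_ne_zero_iff_of_exponent_ne_zero (by norm_num)]
    exact mul_ne_zero (neg_ne_zero.mpr I_ne_zero) hτ0
  have hT := theta_eq him (-(u / r) / τ)
  have e1 : xp τ r (2 * r) = cexp (2 * Real.pi * I * (-1 / τ)) := by
    rw [xp]; congr 1; field_simp
  have e2 : xp τ r (2 * u) = cexp (2 * Real.pi * I * (-(u / r) / τ)) := by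
    rw [xp]; congr 1; field_simp
  have hF := jacobiTheta₂_functional_equation (-(u / r) + τ / 2 + 1 / 2) τ
  have e3 : (-(u / r) + τ / 2 + 1 / 2) / τ = -(u / r) / τ + 1 / 2 - (-1 / τ) / 2 := by
    field_simp; ring
  rw [e3, ← hT, ← e1, ← e2] at hF
  rw [J_eq, hF, br, xp]
  generalize Theta (xp τ r (2 * r)) (xp τ r (2 * u)) = X
  have key : cexp (-I * Real.pi * (u ^ 2 / r - u) / (r * τ)) =
      I * cexp (Real.pi * I / (4 * τ)) * (cexp (Real.pi * I * τ / 4 + Real.pi * I * -(u / r)) *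
       cexp (-Real.pi * I * (-(u / r) + τ / 2 + 1 / 2) ^ 2 / τ)) := by
    have : I = cexp (Real.pi / 2 * I) := Complex.exp_pi_div_two_mul_I.symm
    nth_rewrite 2 [this]
    rw [← Complex.exp_add, ← Complex.exp_add, ← Complex.exp_add]
    congr 1
    field_simp
    ring
  rw [key]
  field_simp

lemma br_neg {τ : ℂ} (hτ : 0 < τ.im) {r : ℝ} (hr : 0 < r) (u : ℂ) : br τ r (-u) = - br τ r u := by
  rw [br_eq hτ hr, br_eq hτ hr, neg_div, J_neg]; ring

lemma term_half (n : ℤ) (X σ : ℂ) : jacobiTheta₂_term n (X + 1 / 2) σ =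
    cexp (Real.pi * I * n) * jacobiTheta₂_term n X σ := by
  rw [jacobiTheta₂_term, jacobiTheta₂_term, ← Complex.exp_add]; ring_nf

lemma exp_two_pi_int (n : ℤ) : cexp (2 * Real.pi * I * n) = 1 := by
  rw [Complex.exp_eq_one_iff]; exact ⟨n, by ring⟩

lemma prod_aux (f1 f2 f3 f4 g1 g2 : ℤ → ℂ) (c : ℂ)
    (h1 : Summable fun n => ‖f1 n‖) (h2 : Summable fun n => ‖f2 n‖)
    (h3 : Summable fun n => ‖f3 n‖) (h4 : Summable fun n => ‖f4 n‖)
    (k1 : Summable fun n => ‖g1 n‖) (k2 : Summable fun n => ‖g2 n‖)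
    (he : ∀ m l : ℤ, f1 (m + 2 * l) * f2 m - f3 (m + 2 * l) * f4 m = 0)
    (ho : ∀ a b : ℤ, f1 (a + b + 1) * f2 (a - b) - f3 (a + b + 1) * f4 (a - b) =
      c * (g1 a * g2 b)) :
    (∑' n, f1 n) * (∑' n, f2 n) - (∑' n, f3 n) * (∑' n, f4 n) =
      c * ((∑' n, g1 n) * (∑' n, g2 n)) := by
  let t : ℤ × ℤ → ℂ := fun q => f1 q.1 * f2 q.2 - f3 q.1 * f4 q.2
  let φ : ℤ × ℤ → ℤ × ℤ := fun q => (q.1 + q.2 + 1, q.1 - q.2)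
  have hφ : Function.Injective φ := by
    rintro ⟨a, b⟩ ⟨a', b'⟩ h
    simp only [φ, Prod.mk.injEq] at h ⊢
    omega
  have e12 := tsum_mul_tsum_of_summable_norm h1 h2
  have e34 := tsum_mul_tsum_of_summable_norm h3 h4
  have ek := tsum_mul_tsum_of_summable_norm k1 k2
  have es : ∑' q, t q = (∑' q : ℤ × ℤ, f1 q.1 * f2 q.2) - ∑' q : ℤ × ℤ, f3 q.1 * f4 q.2 :=
    Summable.tsum_sub (summable_mul_of_summable_norm h1 h2) (summable_mul_of_summable_norm h3 h4)
  have hsupp : Function.support t ⊆ Set.range φ := by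
    rintro ⟨n, m⟩ h
    by_contra hc
    apply h
    have hpar : ∃ l, n = m + 2 * l := by
      by_contra h'
      apply hc
      refine ⟨((n + m - 1) / 2, (n - m - 1) / 2), ?_⟩
      have : (n - m) % 2 = 1 := by
        rcases Int.emod_two_eq_zero_or_one (n - m) with h0 | h0
        · exact absurd ⟨(n - m) / 2, by omega⟩ h'
        · exact h0
      simp only [φ, Prod.mk.injEq]
      omega
    obtain ⟨l, rfl⟩ := hpar
    exact he m l
  have et : ∑' q, t (φ q) = ∑' q, t q := hφ.tsum_eq (f := t) hsupp
  have eg : ∑' q, t (φ q) = ∑' q : ℤ × ℤ, c * (g1 q.1 * g2 q.2) := tsum_congr fun q => ho q.1 q.2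
  rw [e12, e34, ek, ← es, ← et, eg, tsum_mul_left]

lemma theta_add {τ : ℂ} (hτ : 0 < τ.im) (X Y : ℂ) :
    jacobiTheta₂ (X + 1 / 2) (τ / 2) * jacobiTheta₂ Y (τ / 2) -
      jacobiTheta₂ X (τ / 2) * jacobiTheta₂ (Y + 1 / 2) (τ / 2) =
    -2 * (J τ (X + Y) * J τ (X - Y)) := by
  have h2 : 0 < (τ / 2).im := by
    have : (τ / 2).im = τ.im / 2 := by simp
    rw [this]; linarith
  have hs : ∀ Z, Summable fun n => ‖jacobiTheta₂_term n Z (τ / 2)‖ := fun Z =>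
    ((summable_jacobiTheta₂_term_iff Z _).mpr h2).norm
  have hJ : ∀ Z, Summable fun n => ‖Jt τ Z n‖ := fun Z => (Jt_summable hτ Z).norm
  refine prod_aux (fun n => jacobiTheta₂_term n (X + 1 / 2) (τ / 2))
    (fun n => jacobiTheta₂_term n Y (τ / 2)) (fun n => jacobiTheta₂_term n X (τ / 2))
    (fun n => jacobiTheta₂_term n (Y + 1 / 2) (τ / 2)) (Jt τ (X + Y)) (Jt τ (X - Y)) (-2)
    (hs _) (hs _) (hs _) (hs _) (hJ _) (hJ _) ?_ ?_
  · intro m l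
    simp only [term_half]
    have e2 : cexp (Real.pi * I * ((m + 2 * l : ℤ) : ℂ)) = cexp (Real.pi * I * m) := by
      rw [Complex.exp_eq_exp_iff_exists_int]
      exact ⟨l, by push_cast; ring⟩
    rw [e2]; ring
  · intro a b
    simp only [term_half]
    have e1 : cexp (Real.pi * I * ((a + b + 1 : ℤ) : ℂ)) = -cexp (Real.pi * I * (a + b)) := by
      push_cast
      rw [mul_add, Complex.exp_add, mul_one, Complex.exp_pi_mul_I]; ring
    have e2 : cexp (Real.pi * I * ((a - b : ℤ) : ℂ)) = cexp (Real.pi * I * (a + b)) := by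
      rw [Complex.exp_eq_exp_iff_exists_int]
      exact ⟨-b, by push_cast; ring⟩
    have e3 : jacobiTheta₂_term (a + b + 1) X (τ / 2) * jacobiTheta₂_term (a - b) Y (τ / 2) * cexp (Real.pi * I * (a + b)) =
        Jt τ (X + Y) a * Jt τ (X - Y) b := by
      simp only [jacobiTheta₂_term, Jt, ← Complex.exp_add]
      congr 1
      push_cast
      ring
    rw [e1, e2, ← e3]
    ring

/-- the two even functions -/
def fp (τ : ℂ) (r : ℝ) (x : ℂ) : ℂ := th0 (x / r) (τ / 2)
def fm (τ : ℂ) (r : ℝ) (x : ℂ) : ℂ := th3 (x / r) (τ / 2)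

lemma half_im {τ : ℂ} (hτ : 0 < τ.im) : 0 < (τ / 2).im := by
  have : (τ / 2).im = τ.im / 2 := by simp
  rw [this]; linarith

lemma fp_neg {τ : ℂ} (hτ : 0 < τ.im) (r : ℝ) (x : ℂ) : fp τ r (-x) = fp τ r x := by
  rw [fp, fp, th0_eq (half_im hτ), th0_eq (half_im hτ), ← jacobiTheta₂_neg_left,
    show x / r + 1 / 2 = -(-x / r + 1 / 2) + 1 by ring, jacobiTheta₂_add_left]

lemma fm_neg {τ : ℂ} (hτ : 0 < τ.im) (r : ℝ) (x : ℂ) : fm τ r (-x) = fm τ r x := by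
  rw [fm, fm, th3_eq (half_im hτ), th3_eq (half_im hτ), neg_div, jacobiTheta₂_neg_left]

lemma Cc_sq {τ : ℂ} (hτ : 0 < τ.im) {r : ℝ} (hr : 0 < r) :
    Cc τ r ^ 2 = cexp (Real.pi * I / (2 * τ)) * (-I) * τ := by
  have hτ0 : τ ≠ 0 := by rintro rfl; simp at hτ
  have hr0 : (r : ℂ) ≠ 0 := by exact_mod_cast hr.ne'
  have e1 : (τ ^ (1 / 2 : ℂ)) ^ 2 = τ := by
    rw [← Complex.cpow_nat_mul]; norm_num
  have e2 : xp τ r (-r / 4) ^ 2 = cexp (Real.pi * I / (2 * τ)) := by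
    rw [xp, ← Complex.exp_nat_mul]; congr 1; field_simp; norm_num
  have e3 : cexp (-Real.pi * I / 4) ^ 2 = -I := by
    rw [← Complex.exp_nat_mul]
    have : ((2 : ℕ) : ℂ) * (-Real.pi * I / 4) = -(Real.pi / 2 * I) := by push_cast; ring
    rw [this, Complex.exp_neg, Complex.exp_pi_div_two_mul_I]; simp
  rw [Cc, mul_pow, mul_pow, e1, e2, e3]

lemma Cc_ne {τ : ℂ} (hτ : 0 < τ.im) {r : ℝ} (hr : 0 < r) : Cc τ r ^ 2 ≠ 0 := by
  have hτ0 : τ ≠ 0 := by rintro rfl; simp at hτ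
  rw [Cc_sq hτ hr]
  exact mul_ne_zero (mul_ne_zero (Complex.exp_ne_zero _) (neg_ne_zero.mpr I_ne_zero)) hτ0

/-- key Wronskian-type identity -/
lemma wron {τ : ℂ} (hτ : 0 < τ.im) {r : ℝ} (hr : 0 < r) (x y : ℂ) :
    Cc τ r ^ 2 * (fp τ r x * fm τ r y - fm τ r x * fp τ r y) =
      2 * (br τ r (x + y) * br τ r (x - y)) := by
  rw [fp, fp, fm, fm, th0_eq (half_im hτ), th0_eq (half_im hτ), th3_eq (half_im hτ),
    th3_eq (half_im hτ), theta_add hτ, Cc_sq hτ hr, br_eq hτ hr, br_eq hτ hr, J_neg, J_neg,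
    add_div, sub_div]
  have e1 : (-I * τ) ^ (1 / 2 : ℂ) * (-I * τ) ^ (1 / 2 : ℂ) = -I * τ := by
    rw [← pow_two, ← Complex.cpow_nat_mul]; norm_num
  have e2 : cexp (Real.pi * I / (2 * τ)) = cexp (Real.pi * I / (4 * τ)) * cexp (Real.pi * I / (4 * τ)) := by
    rw [← Complex.exp_add]; congr 1; ring
  rw [e2]
  set A := (-I * τ) ^ (1 / 2 : ℂ)
  set E := cexp (Real.pi * I / (4 * τ))
  set J1 := J τ (x / r + y / r)
  set J2 := J τ (x / r - y / r)
  have hI : I * I = -1 := I_mul_I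
  calc _ = (-I * τ) * (E * E * (-2) * J1 * J2) := by ring
    _ = (A * A) * (E * E * (-2) * J1 * J2) := by rw [e1]
    _ = (A * A) * (E * E * (2 * (I * I)) * J1 * J2) := by rw [hI]; ring
    _ = _ := by ring

lemma psi_one (τ : ℂ) (r : ℝ) (u : ℂ) (a b : ℤ) :
    psi τ r u 1 a b = fp τ r ((((a : ℂ) - b) * u + a) / 2) := by
  rw [psi, if_pos rfl, fp]; congr 1; ring

lemma psi_neg_one (τ : ℂ) (r : ℝ) (u : ℂ) (a b : ℤ) :
    psi τ r u (-1) a b = fm τ r ((((a : ℂ) - b) * u + a) / 2) := by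
  rw [psi, if_neg (by norm_num), fm]; congr 1; ring

lemma br_zero {τ : ℂ} (hτ : 0 < τ.im) {r : ℝ} (hr : 0 < r) : br τ r 0 = 0 := by
  have h := br_neg hτ hr 0
  rw [neg_zero] at h
  linear_combination (1 / 2 : ℂ) * h

lemma weier {τ : ℂ} (hτ : 0 < τ.im) {r : ℝ} (hr : 0 < r) (x y z w : ℂ) :
    br τ r (x + y) * br τ r (x - y) * (br τ r (z + w) * br τ r (z - w)) -
    br τ r (x + z) * br τ r (x - z) * (br τ r (y + w) * br τ r (y - w)) +
    br τ r (x + w) * br τ r (x - w) * (br τ r (y + z) * br τ r (y - z)) = 0 := by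
  have h := wron hτ hr
  have e : ∀ x y z w, br τ r (x + y) * br τ r (x - y) * (br τ r (z + w) * br τ r (z - w)) =
      (1 / 4) * (Cc τ r ^ 2 * (fp τ r x * fm τ r y - fm τ r x * fp τ r y)) *
        (Cc τ r ^ 2 * (fp τ r z * fm τ r w - fm τ r z * fp τ r w)) := by
    intro x y z w
    rw [h, h]; ring
  rw [e, e, e]; ring

/-- one step pairing -/
def P (τ : ℂ) (r : ℝ) (u : ℂ) (c s : ℤ) (v : ℂ × ℂ) : ℂ :=
  -(s : ℂ) * Cc τ r ^ 2 * (v.1 * fm τ r ((s * u + c) / 2) - v.2 * fp τ r ((s * u + c) / 2)) /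
    (2 * br τ r c * br τ r u)

def lv (τ : ℂ) (r : ℝ) (x : ℂ) : ℂ × ℂ := (fp τ r x, fm τ r x)

def ev (b : Bool) : ℂ × ℂ := if b then (1, 0) else (0, 1)

lemma psiStar_eq (τ : ℂ) (r : ℝ) (u : ℂ) (c s : ℤ) (b : Bool) :
    psiStar τ r u (sg b) (c + s) c = P τ r u c s (ev b) := by
  cases b
  · simp only [sg, ev, psiStar, P, Bool.false_eq_true, if_false, neg_neg, psi_one]
    push_cast
    rw [show ((((c : ℂ) + s - c) * (u - 1) + (c + s)) / 2) = (s * u + c) / 2 by ring]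
    ring
  · simp only [sg, ev, psiStar, P, if_true, psi_neg_one]
    push_cast
    rw [show ((((c : ℂ) + s - c) * (u - 1) + (c + s)) / 2) = (s * u + c) / 2 by ring]
    ring

lemma P_lv {τ : ℂ} (hτ : 0 < τ.im) {r : ℝ} (hr : 0 < r) (u : ℂ) (c s : ℤ) (x : ℂ) :
    P τ r u c s (lv τ r x) = -s * (br τ r (x + (s * u + c) / 2) * br τ r (x - (s * u + c) / 2)) /
      (br τ r c * br τ r u) := by
  have h := wron hτ hr x ((s * u + c) / 2)
  rw [P, lv]
  rw [show -(s : ℂ) * Cc τ r ^ 2 * (fp τ r x * fm τ r ((s * u + c) / 2) - fm τ r x * fp τ r ((s * u + c) / 2)) = -s * (Cc τ r ^ 2 * (fp τ r x * fm τ r ((s * u + c) / 2) - fm τ r x * fp τ r ((s * u + c) / 2))) by ring, h]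
  rw [show -(s : ℂ) * (2 * (br τ r (x + (s * u + c) / 2) * br τ r (x - (s * u + c) / 2))) = 2 * (-s * (br τ r (x + (s * u + c) / 2) * br τ r (x - (s * u + c) / 2))) by ring, mul_assoc 2, mul_div_mul_left _ _ two_ne_zero]

/-- the path functional -/
def G (τ : ℂ) (r : ℝ) (u : ℂ) (d : ℤ) : List (ℂ × ℂ) → ℤ → ℂ
  | [], c => if c = d then 1 else 0
  | v :: L, c => P τ r (u + L.length) c 1 v * G τ r u d L (c + 1) +
      P τ r (u + L.length) c (-1) v * G τ r u d L (c + -1)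

lemma G_lin (τ : ℂ) (r : ℝ) (u : ℂ) (d : ℤ) (x y : ℂ) (v w z : ℂ × ℂ) (L : List (ℂ × ℂ)) (c : ℤ)
    (h1 : z.1 = x * v.1 + y * w.1) (h2 : z.2 = x * v.2 + y * w.2) :
    G τ r u d (z :: L) c = x * G τ r u d (v :: L) c + y * G τ r u d (w :: L) c := by
  simp only [G, P, h1, h2]; ring

lemma G_unreach (τ : ℂ) (r : ℝ) (u : ℂ) (d : ℤ) (L : List (ℂ × ℂ)) : ∀ c : ℤ,
    (L.length : ℤ) < c - d → G τ r u d L c = 0 := by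
  induction L with
  | nil => intro c h; simp at h; rw [G, if_neg (by omega)]
  | cons v L ih =>
    intro c h
    simp only [List.length_cons] at h; push_cast at h
    rw [G, ih _ (by omega), ih _ (by omega)]; ring

lemma P_anti {τ : ℂ} (hτ : 0 < τ.im) {r : ℝ} (hr : 0 < r) (u : ℂ) (c s s' : ℤ) (v w : ℂ × ℂ) :
    P τ r (u + 1) c s v * P τ r u (c + s) s' w - P τ r (u + 1) c s w * P τ r u (c + s) s' v =
    (s * s' * Cc τ r ^ 2 * (v.1 * w.2 - v.2 * w.1) *
      (br τ r ((s * (u + 1) + c) / 2 + (s' * u + (c + s)) / 2) *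
        br τ r ((s * (u + 1) + c) / 2 - (s' * u + (c + s)) / 2))) /
      (2 * br τ r c * br τ r (u + 1) * br τ r (c + s) * br τ r u) := by
  have h := wron hτ hr ((s * (u + 1) + c) / 2) ((s' * u + (c + s)) / 2)
  have h' : br τ r ((s * (u + 1) + c) / 2 + (s' * u + (c + s)) / 2) *
        br τ r ((s * (u + 1) + c) / 2 - (s' * u + (c + s)) / 2) = (1 / 2) * (Cc τ r ^ 2 *
    (fp τ r ((s * (u + 1) + c) / 2) * fm τ r ((s' * u + (c + s)) / 2) -
      fm τ r ((s * (u + 1) + c) / 2) * fp τ r ((s' * u + (c + s)) / 2))) := by rw [h]; ring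
  rw [h']
  simp only [P]
  push_cast
  simp only [div_eq_mul_inv, mul_inv]
  ring

lemma G_swap {τ : ℂ} (hτ : 0 < τ.im) {r : ℝ} (hr : 0 < r) (u : ℂ) (d : ℤ) (v w : ℂ × ℂ)
    (L : List (ℂ × ℂ)) (c : ℤ) (h1 : br τ r ((c : ℂ) + 1) ≠ 0) (h2 : br τ r ((c : ℂ) + -1) ≠ 0) :
    G τ r u d (v :: w :: L) c = G τ r u d (w :: v :: L) c := by
  simp only [G, List.length_cons]
  push_cast
  rw [← add_assoc]
  set U := u + (L.length : ℂ)
  have a1 := P_anti hτ hr U c 1 1 v w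
  have a2 := P_anti hτ hr U c 1 (-1) v w
  have a3 := P_anti hτ hr U c (-1) 1 v w
  have a4 := P_anti hτ hr U c (-1) (-1) v w
  push_cast at a1 a2 a3 a4
  rw [show (1 * (U + 1) + (c : ℂ)) / 2 - (1 * U + (c + 1)) / 2 = 0 by ring, br_zero hτ hr] at a1
  rw [show (-1 * (U + 1) + (c : ℂ)) / 2 - (-1 * U + (c + -1)) / 2 = 0 by ring, br_zero hτ hr] at a4
  rw [show (1 * (U + 1) + (c : ℂ)) / 2 - (-1 * U + (c + 1)) / 2 = U by ring,
    show (1 * (U + 1) + (c : ℂ)) / 2 + (-1 * U + (c + 1)) / 2 = c + 1 by ring] at a2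
  rw [show (-1 * (U + 1) + (c : ℂ)) / 2 - (1 * U + (c + -1)) / 2 = -U by ring,
    show (-1 * (U + 1) + (c : ℂ)) / 2 + (1 * U + (c + -1)) / 2 = c + -1 by ring, br_neg hτ hr] at a3
  have e2 : c + 1 + -1 = c := by ring
  have e3 : c + -1 + 1 = c := by ring
  rw [e2, e3]
  have k2 : 1 * -1 * Cc τ r ^ 2 * (v.1 * w.2 - v.2 * w.1) * (br τ r (c + 1) * br τ r U) /
      (2 * br τ r c * br τ r (U + 1) * br τ r (c + 1) * br τ r U) = 1 * -1 * Cc τ r ^ 2 * (v.1 * w.2 - v.2 * w.1) * br τ r U /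
      (2 * br τ r c * br τ r (U + 1) * br τ r U) := by
    rw [← mul_div_mul_right _ (2 * br τ r c * br τ r (U + 1) * br τ r U) h1]; congr 1 <;> ring
  have k3 : -1 * 1 * Cc τ r ^ 2 * (v.1 * w.2 - v.2 * w.1) * (br τ r (c + -1) * -br τ r U) /
      (2 * br τ r c * br τ r (U + 1) * br τ r (c + -1) * br τ r U) = -(1 * -1 * Cc τ r ^ 2 * (v.1 * w.2 - v.2 * w.1) * br τ r U /
      (2 * br τ r c * br τ r (U + 1) * br τ r U)) := by
    rw [← neg_div, ← mul_div_mul_right _ (2 * br τ r c * br τ r (U + 1) * br τ r U) h2]; congr 1 <;> ring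
  rw [k2] at a2
  rw [k3] at a3
  linear_combination a1 * G τ r u d L (c + 1 + 1) + (a2 + a3) * G τ r u d L c +
    a4 * G τ r u d L (c + -1 + -1)

lemma G_perm {τ : ℂ} (hτ : 0 < τ.im) {r : ℝ} (hr : 0 < r) (u : ℂ) (d : ℤ) {L1 L2 : List (ℂ × ℂ)}
    (hp : L1.Perm L2) : ∀ c : ℤ, (∀ s : ℤ, |s - c| ≤ (L1.length : ℤ) → br τ r s ≠ 0) →
    G τ r u d L1 c = G τ r u d L2 c := by
  induction hp with
  | nil => intro c _; rfl
  | @cons v l1 l2 h ih =>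
    intro c hc
    simp only [List.length_cons] at hc
    push_cast at hc
    rw [G, G, ih (c + 1), ih (c + -1), h.length_eq]
    · intro s hs; apply hc; rw [abs_le] at hs ⊢; omega
    · intro s hs; apply hc; rw [abs_le] at hs ⊢; omega
  | swap v w l =>
    intro c hc
    simp only [List.length_cons] at hc
    push_cast at hc
    apply G_swap hτ hr
    · have := hc (c + 1) (by rw [abs_le]; omega)
      push_cast at this; exact this
    · have := hc (c + -1) (by rw [abs_le]; omega)
      push_cast at this; exact this
  | trans h1 h2 ih1 ih2 =>
    intro c hc
    rw [ih1 c hc]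
    exact ih2 c (by rw [← h1.length_eq]; exact hc)

lemma G_up {τ : ℂ} (hτ : 0 < τ.im) {r : ℝ} (hr : 0 < r) (u : ℂ) (d : ℤ) (L : List (ℂ × ℂ)) (c : ℤ)
    (x : ℂ) (hx : x = (c - u - L.length) / 2) (h1 : br τ r c ≠ 0) (h2 : br τ r (u + L.length) ≠ 0) :
    G τ r u d (lv τ r x :: L) c = G τ r u d L (c + 1) := by
  rw [G, P_lv hτ hr, P_lv hτ hr]
  push_cast
  rw [show x + (1 * (u + L.length) + c) / 2 = c by rw [hx]; ring,
    show x - (1 * (u + L.length) + c) / 2 = -(u + L.length) by rw [hx]; ring,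
    show x - (-1 * (u + L.length) + c) / 2 = 0 by rw [hx]; ring, br_zero hτ hr, br_neg hτ hr]
  field_simp
  ring

lemma lv_neg {τ : ℂ} (hτ : 0 < τ.im) (r : ℝ) (x : ℂ) : lv τ r (-x) = lv τ r x := by
  rw [lv, lv, fp_neg hτ, fm_neg hτ]

lemma G_down {τ : ℂ} (hτ : 0 < τ.im) {r : ℝ} (hr : 0 < r) (u : ℂ) (d : ℤ) (L : List (ℂ × ℂ)) (c : ℤ)
    (x : ℂ) (hx : x = (-c - u - L.length) / 2) (h1 : br τ r c ≠ 0) (h2 : br τ r (u + L.length) ≠ 0) :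
    G τ r u d (lv τ r x :: L) c = G τ r u d L (c + -1) := by
  rw [G, P_lv hτ hr, P_lv hτ hr]
  push_cast
  rw [show x + (1 * (u + L.length) + c) / 2 = 0 by rw [hx]; ring,
    show x + (-1 * (u + L.length) + c) / 2 = -(u + L.length) by rw [hx]; ring,
    show x - (-1 * (u + L.length) + c) / 2 = -c by rw [hx]; ring, br_zero hτ hr, br_neg hτ hr, br_neg hτ hr]
  field_simp
  ring

/-- expansion of a vector in two others -/
lemma G_exp {τ : ℂ} (hτ : 0 < τ.im) {r : ℝ} (hr : 0 < r) (u : ℂ) (d : ℤ) (L : List (ℂ × ℂ)) (c : ℤ)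
    (x g e : ℂ) (h1 : br τ r (g - e) ≠ 0) (h2 : br τ r (g + e) ≠ 0) :
    G τ r u d (lv τ r x :: L) c =
      br τ r (x - e) * br τ r (x + e) / (br τ r (g - e) * br τ r (g + e)) *
        G τ r u d (lv τ r g :: L) c -
      br τ r (x - g) * br τ r (x + g) / (br τ r (g - e) * br τ r (g + e)) *
        G τ r u d (lv τ r e :: L) c := by
  rw [sub_eq_add_neg, ← neg_mul]
  have w1 := wron hτ hr g e
  have w2 := wron hτ hr x e
  have w3 := wron hτ hr x g
  have hC := Cc_ne hτ hr
  have h12 := mul_ne_zero h1 h2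
  have e1 : ∀ A B D : ℂ, A * (br τ r (g + e) * br τ r (g - e)) = (br τ r (x + e) * br τ r (x - e)) * B
      - (br τ r (x + g) * br τ r (x - g)) * D → A = br τ r (x - e) * br τ r (x + e) / (br τ r (g - e) * br τ r (g + e)) * B
      + -(br τ r (x - g) * br τ r (x + g) / (br τ r (g - e) * br τ r (g + e))) * D := by
    intro A B D h
    field_simp
    linear_combination h
  apply G_lin <;> apply e1 <;> simp only [lv]
  · linear_combination (-1 / 2 * fp τ r x) * w1 + (1 / 2 * fp τ r g) * w2 - (1 / 2 * fp τ r e) * w3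
  · linear_combination (-1 / 2 * fm τ r x) * w1 + (1 / 2 * fm τ r g) * w2 - (1 / 2 * fm τ r e) * w3

/-- block of vectors -/
def Bk (τ : ℂ) (r : ℝ) : ℕ → ℂ → List (ℂ × ℂ)
  | 0, _ => []
  | n + 1, x => lv τ r x :: Bk τ r n (x + 1)

lemma Bk_length (τ : ℂ) (r : ℝ) (n : ℕ) : ∀ x, (Bk τ r n x).length = n := by
  induction n with
  | zero => intro x; rfl
  | succ n ih => intro x; simp [Bk, ih]

lemma Bk_append (τ : ℂ) (r : ℝ) (p q : ℕ) : ∀ x, Bk τ r (p + q) x = Bk τ r p x ++ Bk τ r q (x + p) := by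
  induction p with
  | zero => intro x; simp [Bk]
  | succ p ih =>
    intro x
    rw [show p + 1 + q = (p + q) + 1 by ring]
    simp only [Bk, List.cons_append]
    rw [ih]; push_cast; rw [add_assoc, add_comm 1 (p : ℂ)]

lemma Bk_get (τ : ℂ) (r : ℝ) (n : ℕ) : ∀ (x : ℂ) (i : ℕ) (h : i < (Bk τ r n x).length),
    (Bk τ r n x)[i] = lv τ r (x + i) := by
  induction n with
  | zero => intro x i h; simp [Bk] at h
  | succ n ih =>
    intro x i h
    cases i with
    | zero => simp [Bk]
    | succ i => simp only [Bk, List.getElem_cons_succ]; rw [ih]; push_cast; congr 1; ring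

lemma brF_zero (τ : ℂ) (r : ℝ) (x : ℂ) : brF τ r x 0 = 1 := by simp [brF]

lemma brF_succ (τ : ℂ) (r : ℝ) (x : ℂ) (n : ℕ) : brF τ r x (n + 1) = brF τ r x n * br τ r (x + n) := by
  rw [brF, Finset.prod_range_succ, brF]

lemma brF_succ' (τ : ℂ) (r : ℝ) (x : ℂ) (n : ℕ) : brF τ r x (n + 1) = br τ r x * brF τ r (x + 1) n := by
  rw [brF, Finset.prod_range_succ', brF, mul_comm]
  congr 1
  · push_cast; rw [add_zero]
  · refine Finset.prod_congr rfl fun i _ => ?_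
    push_cast; congr 1; ring

lemma brF_ne {τ : ℂ} {r : ℝ} {x : ℂ} {n : ℕ} (h : ∀ i : ℕ, i < n → br τ r (x + i) ≠ 0) :
    brF τ r x n ≠ 0 :=
  Finset.prod_ne_zero_iff.mpr fun i hi => h i (Finset.mem_range.mp hi)

lemma brF_ne_iff {τ : ℂ} {r : ℝ} {x : ℂ} {n : ℕ} :
    brF τ r x n ≠ 0 ↔ ∀ i : ℕ, i < n → br τ r (x + i) ≠ 0 :=
  ⟨fun h i hi => Finset.prod_ne_zero_iff.mp h i (Finset.mem_range.mpr hi), brF_ne⟩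

/-- symmetric form of the binomial coefficient -/
def Cpq (τ : ℂ) (r : ℝ) (p q : ℕ) (α g e : ℂ) : ℂ :=
  brF τ r 1 (p + q) / (brF τ r 1 p * brF τ r 1 q) *
    (brF τ r (α - e) p * brF τ r (α + e + q) p * brF τ r (α - g) q * brF τ r (α + g + p) q) /
    (brF τ r (g - e - q) p * brF τ r (e - g - p) q * brF τ r (g + e) (p + q))

lemma Cnk_eq (τ : ℂ) (r : ℝ) (p q : ℕ) (α g e : ℂ) :
    Cnk τ r (p + q) p α g e = Cpq τ r p q α g e := by
  rw [Cnk, Cpq, Nat.add_sub_cancel_left]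
  push_cast
  rw [show α + e + (p + q) - p = α + e + (q : ℂ) by ring,
    show g - e + p - (p + q) = g - e - (q : ℂ) by ring]

lemma Cpq_symm (τ : ℂ) (r : ℝ) (p q : ℕ) (α g e : ℂ) : Cpq τ r p q α g e = Cpq τ r q p α e g := by
  rw [Cpq, Cpq, add_comm q p, add_comm e g]; ring

lemma pascal_key {τ : ℂ} (hτ : 0 < τ.im) {r : ℝ} (hr : 0 < r) (α g e s M : ℂ) :
    br τ r s * br τ r (g - e) * (br τ r (α + e + s - M) * br τ r (α + g + M)) =
      br τ r M * br τ r (g - e + M - s) * (br τ r (α + e) * br τ r (α + g + s)) +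
      br τ r (s - M) * br τ r (g - e + M) * (br τ r (α + e + s) * br τ r (α + g)) := by
  have h := weier hτ hr ((2 * α + g + e + s) / 2) ((g - e + 2 * M - s) / 2) ((s + (g - e)) / 2)
    ((s - (g - e)) / 2)
  rw [show (2 * α + g + e + s) / 2 + (g - e + 2 * M - s) / 2 = α + g + M by ring,
    show (2 * α + g + e + s) / 2 - (g - e + 2 * M - s) / 2 = α + e + s - M by ring,
    show (s + (g - e)) / 2 + (s - (g - e)) / 2 = s by ring,
    show (s + (g - e)) / 2 - (s - (g - e)) / 2 = g - e by ring,
    show (2 * α + g + e + s) / 2 + (s + (g - e)) / 2 = α + g + s by ring,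
    show (2 * α + g + e + s) / 2 - (s + (g - e)) / 2 = α + e by ring,
    show (g - e + 2 * M - s) / 2 + (s - (g - e)) / 2 = M by ring,
    show (g - e + 2 * M - s) / 2 - (s - (g - e)) / 2 = g - e + M - s by ring,
    show (2 * α + g + e + s) / 2 + (s - (g - e)) / 2 = α + e + s by ring,
    show (2 * α + g + e + s) / 2 - (s - (g - e)) / 2 = α + g by ring,
    show (g - e + 2 * M - s) / 2 + (s + (g - e)) / 2 = g - e + M by ring,
    show (g - e + 2 * M - s) / 2 - (s + (g - e)) / 2 = -(s - M) by ring, br_neg hτ hr] at h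
  linear_combination h

lemma pascal_edge {τ : ℂ} {r : ℝ} (p : ℕ) (α g e : ℂ)
    (h1 : brF τ r 1 (p + 1) ≠ 0) :
    Cpq τ r (p + 1) 0 α g e = br τ r (α - e) * br τ r (α + e) / (br τ r (g - e) * br τ r (g + e)) *
      Cpq τ r p 0 (α + 1) (g + 1) e := by
  have h1' := h1
  rw [brF_succ, mul_ne_zero_iff] at h1'
  simp only [Cpq, brF_zero, add_zero, Nat.cast_zero, sub_zero, mul_one, div_self h1, div_self h1'.1]
  rw [brF_succ' τ r (α - e), brF_succ' τ r (α + e), brF_succ' τ r (g - e), brF_succ' τ r (g + e),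
    show α + 1 - e = α - e + 1 by ring, show α + 1 + e = α + e + 1 by ring,
    show g + 1 - e = g - e + 1 by ring, show g + 1 + e = g + e + 1 by ring]
  simp only [div_eq_mul_inv, mul_inv]
  ring

lemma pascal_mid {τ : ℂ} (hτ : 0 < τ.im) {r : ℝ} (hr : 0 < r) (p q : ℕ) (α g e : ℂ)
    (h1 : brF τ r 1 (p + 1) ≠ 0) (h2 : brF τ r 1 (q + 1) ≠ 0)
    (h3 : brF τ r (g - e - (q + 1)) (p + 1) ≠ 0) (h4 : brF τ r (e - g - (p + 1)) (q + 1) ≠ 0)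
    (h5 : brF τ r (g + e) (p + q + 2) ≠ 0) (h6 : br τ r (g - e) ≠ 0) :
    Cpq τ r (p + 1) (q + 1) α g e =
      br τ r (α - e) * br τ r (α + e) / (br τ r (g - e) * br τ r (g + e)) *
        Cpq τ r p (q + 1) (α + 1) (g + 1) e -
      br τ r (α - g) * br τ r (α + g) / (br τ r (g - e) * br τ r (g + e)) *
        Cpq τ r (p + 1) q (α + 1) g (e + 1) := by
  have key := pascal_key hτ hr α g e (p + q + 2) (p + 1)
  simp only [Cpq]
  rw [show p + 1 + (q + 1) = p + q + 1 + 1 by ring, show p + (q + 1) = p + q + 1 by ring,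
    show p + 1 + q = p + q + 1 by ring]
  rw [show p + q + 2 = p + q + 1 + 1 by ring, brF_succ'] at h5
  rw [brF_succ] at h1 h2
  rw [brF_succ'] at h3 h4
  rw [brF_succ τ r 1 (p + q + 1), brF_succ τ r 1 p, brF_succ τ r 1 q]
  push_cast at *
  rw [brF_succ' τ r (α - e), brF_succ' τ r (α + e + (q + 1)), brF_succ' τ r (α - g), brF_succ' τ r (α + g + (p + 1)),
    brF_succ' τ r (g - e - (q + 1)), brF_succ' τ r (e - g - (p + 1)), brF_succ' τ r (g + e),
    brF_succ τ r (α + 1 + (g + 1) + p) q, brF_succ τ r (α + 1 + (e + 1) + q) p]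
  rw [show α + 1 - e = α - e + 1 by ring, show α + 1 + e + (q + 1) = α + e + (q + 1) + 1 by ring,
    show α + 1 - (g + 1) = α - g by ring, brF_succ' τ r (α - g),
    show α + 1 + (g + 1) + p = α + g + (p + 1) + 1 by ring,
    show g + 1 - e - (q + 1) = g - e - (q + 1) + 1 by ring,
    show e - (g + 1) - p = e - g - (p + 1) by ring, brF_succ' τ r (e - g - (p + 1)),
    show g + 1 + e = g + e + 1 by ring,
    show α + 1 - (e + 1) = α - e by ring, brF_succ' τ r (α - e),
    show α + 1 + (e + 1) + q = α + e + (q + 1) + 1 by ring,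
    show α + 1 - g = α - g + 1 by ring, show α + 1 + g + (p + 1) = α + g + (p + 1) + 1 by ring,
    show g - (e + 1) - q = g - e - (q + 1) by ring, brF_succ' τ r (g - e - (q + 1)),
    show e + 1 - g - (p + 1) = e - g - (p + 1) + 1 by ring,
    show g + (e + 1) = g + e + 1 by ring]
  rw [show α + e + (p + q + 2) - (p + 1) = α + e + (q + 1) by ring,
    show (p : ℂ) + 1 = 1 + p by ring, show g - e + (1 + p) - (p + q + 2) = g - e - (q + 1) by ring,
    show α + g + (p + q + 2) = α + g + (1 + p) + 1 + q by ring,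
    show α + e + (p + q + 2) = α + e + (q + 1) + 1 + p by ring,
    show p + q + 2 - (1 + (p : ℂ)) = 1 + q by ring,
    show g - e + (1 + p) = -(e - g - (1 + p)) by ring, br_neg hτ hr,
    show p + q + (2 : ℂ) = 1 + (p + q + 1) by ring] at key
  rw [show (p : ℂ) + 1 = 1 + p by ring] at h4 ⊢
  generalize brF τ r 1 (p + q + 1) = N at *
  generalize brF τ r 1 p = F1 at *
  generalize brF τ r 1 q = F2 at *
  generalize brF τ r (α - e + 1) p = X1
  generalize brF τ r (α + e + (q + 1) + 1) p = X2
  generalize brF τ r (α - g + 1) q = X3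
  generalize brF τ r (α + g + (1 + p) + 1) q = X4
  generalize brF τ r (g - e - (q + 1) + 1) p = D1 at *
  generalize brF τ r (e - g - (1 + p) + 1) q = D2 at *
  generalize brF τ r (g + e + 1) (p + q + 1) = D3 at *
  generalize br τ r (α - e) = a1
  generalize br τ r (α - g) = a2
  generalize br τ r (1 + (p + q + 1)) = b1 at *
  generalize br τ r (α + e + (q + 1)) = b2 at *
  generalize br τ r (α + g + (1 + p)) = b3 at *
  generalize br τ r (1 + p) = b4 at *
  generalize br τ r (1 + q) = b5 at *
  generalize br τ r (g - e - (q + 1)) = b6 at *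
  generalize br τ r (e - g - (1 + p)) = b7 at *
  generalize br τ r (g - e) = b8 at *
  generalize br τ r (g + e) = b9 at *
  generalize br τ r (α + e) = c1 at *
  generalize br τ r (α + g) = c2 at *
  generalize br τ r (α + e + (q + 1) + 1 + p) = c3 at *
  generalize br τ r (α + g + (1 + p) + 1 + q) = c4 at *
  simp only [mul_ne_zero_iff] at h1 h2 h3 h4 h5
  obtain ⟨h1, h1'⟩ := h1
  obtain ⟨h2, h2'⟩ := h2
  obtain ⟨h3, h3'⟩ := h3
  obtain ⟨h4, h4'⟩ := h4
  obtain ⟨h5, h5'⟩ := h5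
  field_simp
  linear_combination (N * a1 * X1 * X2 * a2 * X3 * X4) * key

lemma pascal_all {τ : ℂ} (hτ : 0 < τ.im) {r : ℝ} (hr : 0 < r) (n J : ℕ) (hJ : J ≤ n + 1) (m : ℤ)
    (hJm : (J : ℤ) ≤ m) (α g e : ℂ)
    (h1 : brF τ r 1 J ≠ 0) (h2 : brF τ r 1 (n + 1 - J) ≠ 0)
    (h3 : ∀ i : ℤ, -((n : ℤ) + 1) < i → i < (n : ℤ) + 1 → i ≤ m → br τ r (g - e + i) ≠ 0)
    (h5 : ∀ i : ℕ, i < n + 1 → br τ r (g + e + i) ≠ 0) :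
    Cnk τ r (n + 1) J α g e =
      br τ r (α - e) * br τ r (α + e) / (br τ r (g - e) * br τ r (g + e)) *
        (if J = 0 then 0 else Cnk τ r n (J - 1) (α + 1) (g + 1) e) -
      br τ r (α - g) * br τ r (α + g) / (br τ r (g - e) * br τ r (g + e)) *
        (if J = n + 1 then 0 else Cnk τ r n J (α + 1) g (e + 1)) := by
  have h6 : br τ r (g - e) ≠ 0 := by
    have := h3 0 (by omega) (by omega) (by omega)
    simpa using this
  rcases Nat.eq_zero_or_pos J with rfl | hpos
  · have ed := pascal_edge (τ := τ) (r := r) n α e g (by simpa using h2)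
    have c1 := Cnk_eq τ r 0 (n + 1) α g e
    have c2 := Cnk_eq τ r 0 n (α + 1) g (e + 1)
    rw [zero_add] at c1 c2
    rw [if_pos rfl, if_neg (by omega), c1, c2, Cpq_symm, ed, Cpq_symm τ r 0 n,
      show e - g = -(g - e) by ring, br_neg hτ hr, add_comm e g]
    rw [neg_mul, div_neg]; ring
  · obtain ⟨p, rfl⟩ : ∃ p, J = p + 1 := ⟨J - 1, by omega⟩
    rcases Nat.lt_or_ge p n with hlt | hge
    · obtain ⟨q, rfl⟩ : ∃ q, n = p + 1 + q := ⟨n - p - 1, by omega⟩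
      rw [if_neg (by omega), if_neg (by omega), Nat.add_sub_cancel, Cnk_eq,
        show p + 1 + q + 1 = (p + 1) + (q + 1) by ring, Cnk_eq,
        show p + 1 + q = p + (q + 1) by ring, Cnk_eq]
      refine pascal_mid hτ hr p q α g e h1 ?_ ?_ ?_ ?_ h6
      · rwa [show p + 1 + q + 1 - (p + 1) = q + 1 by omega] at h2
      · apply brF_ne
        intro i hi
        have := h3 (i - (q + 1)) (by push_cast; omega) (by push_cast; omega) (by push_cast at hJm; omega)
        push_cast at this
        rwa [show g - e + ((i : ℂ) - (q + 1)) = g - e - (q + 1) + i by ring] at this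
      · apply brF_ne
        intro i hi
        have := h3 (p + 1 - i) (by push_cast; omega) (by push_cast; omega) (by push_cast at hJm; omega)
        push_cast at this
        rw [show e - g - ((p : ℂ) + 1) + i = -(g - e + (p + 1 - i)) by ring, br_neg hτ hr]
        exact neg_ne_zero.mpr this
      · apply brF_ne
        intro i hi
        exact h5 i (by omega)
    · obtain rfl : p = n := by omega
      have ed := pascal_edge (τ := τ) (r := r) p α g e h1
      have c1 := Cnk_eq τ r (p + 1) 0 α g e
      have c2 := Cnk_eq τ r p 0 (α + 1) (g + 1) e
      rw [add_zero] at c1 c2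
      rw [if_neg (by omega), if_pos rfl, Nat.add_sub_cancel, c1, c2, ed]; ring

theorem binom {τ : ℂ} (hτ : 0 < τ.im) {r : ℝ} (hr : 0 < r) (u : ℂ) (d : ℤ) (n : ℕ) :
    ∀ (Y : List (ℂ × ℂ)) (c m : ℤ) (α γ e : ℂ), c - d = n + Y.length - 2 * m →
    (∀ s : ℤ, |s - c| ≤ (n : ℤ) + Y.length → br τ r s ≠ 0) →
    (∀ j : ℕ, j < n + Y.length → br τ r (u + j) ≠ 0) →
    γ = (c - u - (n + Y.length) + 1) / 2 →
    (∀ i : ℤ, -(n : ℤ) < i → i < (n : ℤ) → i ≤ m → br τ r (γ - e + i) ≠ 0) →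
    (∀ i : ℕ, i < n → br τ r (γ + e + i) ≠ 0) →
    (∀ J : ℕ, J ≤ n → G τ r u d (Bk τ r (n - J) e ++ Y) (c + J) = 0 ∨
      (brF τ r 1 J ≠ 0 ∧ brF τ r 1 (n - J) ≠ 0)) →
    G τ r u d (Bk τ r n α ++ Y) c = ∑ J ∈ Finset.range (n + 1),
      Cnk τ r n J α γ e * G τ r u d (Bk τ r (n - J) e ++ Y) (c + J) := by
  induction n with
  | zero =>
    intro Y c m α γ e _ _ _ _ _ _ _
    simp [Cnk, brF_zero, Bk]
  | succ n ih =>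
    intro Y c m α γ e hm hc hu hγ h3 h5 h1
    push_cast at hm hc hγ h3
    have hun : ∀ J : ℕ, J ≤ n + 1 → m < J →
        G τ r u d (Bk τ r (n + 1 - J) e ++ Y) (c + J) = 0 := by
      intro J hJ hmJ
      apply G_unreach
      rw [List.length_append, Bk_length]
      push_cast [hJ]
      omega
    by_cases hm0 : m < 0
    · rw [G_unreach, Finset.sum_eq_zero]
      · intro J hJ
        rw [hun J (by simpa [Nat.lt_succ_iff] using hJ) (by omega), mul_zero]
      · rw [List.length_append, Bk_length]
        push_cast
        omega
    have hcc : br τ r c ≠ 0 := hc c (by simp; omega)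
    have huu : br τ r (u + (n + Y.length : ℕ)) ≠ 0 := hu _ (by omega)
    have hlen : (Bk τ r n (α + 1) ++ Y).length = n + Y.length := by
      rw [List.length_append, Bk_length]
    have hge : br τ r (γ - e) ≠ 0 := by
      have := h3 0 (by omega) (by omega) (by omega)
      simpa using this
    have hge' : br τ r (γ + e) ≠ 0 := by simpa using h5 0 (by omega)
    have step1 : G τ r u d (lv τ r γ :: (Bk τ r n (α + 1) ++ Y)) c =
        ∑ J ∈ Finset.range (n + 1), Cnk τ r n J (α + 1) (γ + 1) e *
          G τ r u d (Bk τ r (n + 1 - (J + 1)) e ++ Y) (c + (J + 1 : ℕ)) := by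
      rw [G_up hτ hr u d _ c γ (by rw [hlen, hγ]; push_cast; ring) hcc (by rw [hlen]; exact huu)]
      rw [ih Y (c + 1) (m - 1) (α + 1) (γ + 1) e (by omega)]
      · refine Finset.sum_congr rfl fun J _ => ?_
        rw [Nat.add_sub_add_right]
        push_cast
        rw [add_assoc c 1, add_comm (1 : ℤ)]
      · intro s hs; apply hc; rw [abs_le] at hs ⊢; omega
      · intro j hj; exact hu j (by omega)
      · rw [hγ]; push_cast; ring
      · intro i i1 i2 i3
        have := h3 (i + 1) (by omega) (by omega) (by omega)
        push_cast at this
        rwa [show γ - e + (i + 1 : ℂ) = γ + 1 - e + i by ring] at this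
      · intro i hi
        have := h5 (i + 1) (by omega)
        push_cast at this
        rwa [show γ + e + (i + 1 : ℂ) = γ + 1 + e + i by ring] at this
      · intro J hJ
        have := h1 (J + 1) (by omega)
        rw [Nat.add_sub_add_right] at this
        push_cast at this
        rw [add_assoc c 1, add_comm (1 : ℤ)]
        refine this.imp id fun h => ⟨?_, h.2⟩
        rw [brF_succ] at h
        exact left_ne_zero_of_mul h.1
    have hX : ∀ J : ℕ, J ≤ n → G τ r u d (Bk τ r (n - J) (e + 1) ++ lv τ r e :: Y) (c + J) =
        G τ r u d (Bk τ r (n + 1 - J) e ++ Y) (c + J) := by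
      intro J hJ
      rw [show n + 1 - J = (n - J) + 1 by omega, Bk, List.cons_append]
      apply G_perm hτ hr u d List.perm_middle
      intro s hs
      apply hc
      rw [List.length_append, List.length_cons, Bk_length] at hs
      push_cast [hJ] at hs
      rw [abs_le] at hs ⊢; omega
    have step2 : G τ r u d (lv τ r e :: (Bk τ r n (α + 1) ++ Y)) c =
        ∑ J ∈ Finset.range (n + 1), Cnk τ r n J (α + 1) γ (e + 1) *
          G τ r u d (Bk τ r (n + 1 - J) e ++ Y) (c + J) := by
      rw [G_perm hτ hr u d (L2 := Bk τ r n (α + 1) ++ lv τ r e :: Y) List.perm_middle.symm]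
      · rw [ih (lv τ r e :: Y) c m (α + 1) γ (e + 1)]
        · refine Finset.sum_congr rfl fun J hJ => ?_
          rw [hX J (by simpa [Nat.lt_succ_iff] using hJ)]
        · rw [List.length_cons]; push_cast; omega
        · intro s hs; apply hc; rw [List.length_cons] at hs; push_cast at hs
          rw [abs_le] at hs ⊢; omega
        · intro j hj; rw [List.length_cons] at hj; exact hu j (by omega)
        · rw [hγ, List.length_cons]; push_cast; ring
        · intro i i1 i2 i3
          have := h3 (i - 1) (by omega) (by omega) (by omega)
          push_cast at this
          rwa [show γ - e + (i - 1 : ℂ) = γ - (e + 1) + i by ring] at this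
        · intro i hi
          have := h5 (i + 1) (by omega)
          push_cast at this
          rwa [show γ + e + (i + 1 : ℂ) = γ + (e + 1) + i by ring] at this
        · intro J hJ
          rw [hX J hJ]
          refine (h1 J (by omega)).imp id fun h => ⟨h.1, ?_⟩
          have h' := h.2
          rw [show n + 1 - J = (n - J) + 1 by omega, brF_succ] at h'
          exact left_ne_zero_of_mul h'
      · intro s hs; apply hc
        rw [List.length_cons, hlen] at hs
        push_cast at hs
        rw [abs_le] at hs ⊢; omega
    rw [Bk, List.cons_append, G_exp hτ hr u d _ c α γ e hge hge', step1, step2]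
    set X : ℕ → ℂ := fun J => G τ r u d (Bk τ r (n + 1 - J) e ++ Y) (c + J) with hXd
    have hterm : ∀ J ∈ Finset.range (n + 1 + 1), Cnk τ r (n + 1) J α γ e * X J =
        br τ r (α - e) * br τ r (α + e) / (br τ r (γ - e) * br τ r (γ + e)) *
          ((if J = 0 then 0 else Cnk τ r n (J - 1) (α + 1) (γ + 1) e) * X J) -
        br τ r (α - γ) * br τ r (α + γ) / (br τ r (γ - e) * br τ r (γ + e)) *
          ((if J = n + 1 then 0 else Cnk τ r n J (α + 1) γ (e + 1)) * X J) := by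
      intro J hJ
      have hJ' : J ≤ n + 1 := by simpa [Nat.lt_succ_iff] using hJ
      by_cases hz : X J = 0
      · rw [hz]; ring
      · have hJm : (J : ℤ) ≤ m := by
          by_contra hlt
          exact hz (hun J hJ' (by omega))
        obtain ⟨k1, k2⟩ := (h1 J hJ').resolve_left hz
        rw [pascal_all hτ hr n J hJ' m hJm α γ e k1 k2 h3 h5]
        ring
    change _ = ∑ J ∈ Finset.range (n + 1 + 1), Cnk τ r (n + 1) J α γ e * X J
    rw [Finset.sum_congr rfl hterm, Finset.sum_sub_distrib, ← Finset.mul_sum, ← Finset.mul_sum]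
    congr 2
    · rw [Finset.sum_range_succ' _ (n + 1)]
      simp [hXd]
    · rw [Finset.sum_range_succ _ (n + 1), if_pos rfl, zero_mul, add_zero]
      refine Finset.sum_congr rfl fun J hJ => ?_
      rw [if_neg (by have := Finset.mem_range.mp hJ; omega)]

lemma G_Bk_down {τ : ℂ} (hτ : 0 < τ.im) {r : ℝ} (hr : 0 < r) (u : ℂ) (d : ℤ) (n : ℕ) :
    ∀ (c : ℤ) (e : ℂ), (∀ s : ℤ, |s - c| ≤ (n : ℤ) → br τ r s ≠ 0) →
    (∀ j : ℕ, j < n → br τ r (u + j) ≠ 0) → e = (-c - u - n + 1) / 2 →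
    G τ r u d (Bk τ r n e) c = if c - n = d then 1 else 0 := by
  induction n with
  | zero => intro c e _ _ _; simp [Bk, G]
  | succ n ih =>
    intro c e hc hu he
    push_cast at hc he
    rw [Bk, G_down hτ hr u d _ c e (by rw [Bk_length, he]; ring) (hc c (by simp; omega))
      (by rw [Bk_length]; exact hu n (by omega)), ih (c + -1) (e + 1)]
    · push_cast
      rw [show c + -1 - (n : ℤ) = c - (n + 1) by ring]
    · intro s hs; apply hc; rw [abs_le] at hs ⊢; omega
    · intro j hj; exact hu j (by omega)
    · rw [he]; push_cast; ring

lemma G_Bk {τ : ℂ} (hτ : 0 < τ.im) {r : ℝ} (hr : 0 < r) (u : ℂ) (d : ℤ) (K M : ℕ) (hM : M ≤ K)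
    (c : ℤ) (hcd : c - d = K - 2 * M) (β γ e : ℂ)
    (hc : ∀ s : ℤ, |s - c| ≤ (K : ℤ) → br τ r s ≠ 0)
    (hu : ∀ j : ℕ, j < K → br τ r (u + j) ≠ 0)
    (hγ : γ = (c - u - K + 1) / 2) (he : e = (-c - u - K + 1) / 2)
    (h1 : brF τ r 1 M ≠ 0) (h2 : brF τ r 1 (K - M) ≠ 0) :
    G τ r u d (Bk τ r K β) c = Cnk τ r K M β γ e := by
  have hG : ∀ J : ℕ, J ≤ K → G τ r u d (Bk τ r (K - J) e ++ []) (c + J) = if J = M then 1 else 0 := by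
    intro J hJ
    rw [List.append_nil, G_Bk_down hτ hr]
    · refine if_congr ?_ rfl rfl
      push_cast [hJ]
      omega
    · intro s hs; apply hc; push_cast [hJ] at hs; rw [abs_le] at hs ⊢; omega
    · intro j hj; exact hu j (by omega)
    · rw [he]; push_cast [hJ]; ring
  have hb := binom hτ hr u d K [] c M β γ e (by simpa using hcd) (by simpa using hc) (by simpa using hu)
    (by simpa using hγ) ?_ ?_ ?_
  · rw [List.append_nil] at hb
    rw [hb, Finset.sum_eq_single M]
    · rw [hG M hM, if_pos rfl, mul_one]
    · intro J hJ hne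
      rw [hG J (by simpa [Nat.lt_succ_iff] using hJ), if_neg hne, mul_zero]
    · intro h; exact absurd (Finset.mem_range.mpr (by omega)) h
  · intro i i1 i2 _
    have := hc (c + i) (by rw [abs_le]; omega)
    push_cast at this
    rwa [show γ - e + i = c + i by rw [hγ, he]; ring]
  · intro i hi
    rw [show γ + e + i = -(u + (K - 1 - i : ℕ)) by
      rw [hγ, he, Nat.sub_sub, Nat.cast_sub (by omega)]; push_cast; ring, br_neg hτ hr]
    exact neg_ne_zero.mpr (hu _ (by omega))
  · intro J hJ
    rw [hG J hJ]
    by_cases h : J = M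
    · right; rw [h]; exact ⟨h1, h2⟩
    · left; rw [if_neg h]

lemma G_eq_R {τ : ℂ} (hτ : 0 < τ.im) {r : ℝ} (hr : 0 < r) (u : ℂ) (k n m : ℕ) (hn : n ≤ k)
    (hm : m ≤ k) (c d : ℤ) (hcd : c - d = (k : ℤ) - 2 * m) (α β γ δ : ℂ)
    (hc : ∀ s : ℤ, |s - c| ≤ (k : ℤ) → br τ r (s : ℂ) ≠ 0)
    (hu : ∀ j : ℕ, j < k → br τ r (u + (j : ℂ)) ≠ 0)
    (hγ : γ = (-u + (c : ℂ) - (k : ℂ) + 1) / 2) (hδ : δ = (-u - (c : ℂ) - (k : ℂ) + 1) / 2)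
    (hR : RdenomNZ τ r k n m β γ δ) :
    G τ r u d (Bk τ r n α ++ Bk τ r (k - n) β) c = Rnm τ r k n m α β γ δ := by
  have hY : (Bk τ r (k - n) β).length = k - n := Bk_length _ _ _ _
  have hun : ∀ J : ℕ, J ≤ n → (m : ℤ) < J →
      G τ r u d (Bk τ r (n - J) (β + k - n) ++ Bk τ r (k - n) β) (c + J) = 0 := by
    intro J hJ hmJ
    apply G_unreach
    rw [List.length_append, Bk_length, Bk_length]
    push_cast [hJ, hn]
    omega
  have hb := binom hτ hr u d n (Bk τ r (k - n) β) c m α γ (β + k - n)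
    (by rw [hY]; push_cast [hn]; omega)
    (by rw [hY]; push_cast [hn]; intro s hs; apply hc; rw [abs_le] at hs ⊢; omega)
    (by rw [hY]; intro j hj; exact hu j (by omega))
    (by rw [hY, hγ]; push_cast [hn]; ring) ?_ ?_ ?_
  · rw [hb, Rnm]
    symm
    have hsub : Finset.range (min n m + 1) ⊆ Finset.range (n + 1) := by
      intro x hx
      rw [Finset.mem_range] at hx ⊢
      omega
    rw [← Finset.sum_subset hsub]
    · refine Finset.sum_congr rfl fun J hJ => ?_
      have hJ' : J ≤ min n m := by simpa [Nat.lt_succ_iff] using hJ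
      have hJn : J ≤ n := by omega
      have hJm : J ≤ m := by omega
      have hJk : J ≤ k := by omega
      congr 1
      rw [G_perm hτ hr u d List.perm_append_comm]
      · have : Bk τ r (k - n) β ++ Bk τ r (n - J) (β + k - n) = Bk τ r (k - J) β := by
          rw [show k - J = (k - n) + (n - J) by omega, Bk_append]
          push_cast [hn]
          rw [add_sub_assoc]
        rw [this]
        have h := (hR J hJ').2
        symm
        refine G_Bk hτ hr u d (k - J) (m - J) (by omega) (c + J) (by push_cast [hJk, hJm]; omega)
          β (γ + J) δ ?_ ?_ ?_ ?_ h.1 h.2.1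
        · intro s hs; apply hc; push_cast [hJk] at hs; rw [abs_le] at hs ⊢; omega
        · intro j hj; exact hu j (by omega)
        · rw [hγ]; push_cast [hJk]; ring
        · rw [hδ]; push_cast [hJk]; ring
      · intro s hs; apply hc
        rw [List.length_append, Bk_length, Bk_length] at hs
        push_cast [hJn, hn] at hs; rw [abs_le] at hs ⊢; omega
    · intro J hJ hJ'
      rw [Finset.mem_range] at hJ hJ'
      rw [hun J (by omega) (by omega), mul_zero]
  · intro i i1 i2 i3
    rcases le_or_gt i 0 with h0 | h0
    · have h := (hR 0 (by omega)).1.2.2.2.1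
      rw [brF_ne_iff] at h
      have h' := h (-i).toNat (by omega)
      rw [show (((-i).toNat : ℕ) : ℂ) = -(i : ℂ) by
        rw [← Int.cast_natCast, Int.toNat_of_nonneg (by omega)]; push_cast; ring] at h'
      rw [show γ - (β + k - n) + i = -(β + k - n - γ - ((0 : ℕ) : ℂ) + -i) by push_cast; ring,
        br_neg hτ hr]
      exact neg_ne_zero.mpr h'
    · have h := (hR i.toNat (by omega)).1.2.2.2.1
      rw [brF_ne_iff] at h
      have h' := h 0 (by omega)
      rw [show ((i.toNat : ℕ) : ℂ) = (i : ℂ) by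
        rw [← Int.cast_natCast, Int.toNat_of_nonneg (by omega)]] at h'
      rw [show γ - (β + k - n) + i = -(β + k - n - γ - i + ((0 : ℕ) : ℂ)) by push_cast; ring,
        br_neg hτ hr]
      exact neg_ne_zero.mpr h'
  · exact brF_ne_iff.mp (hR 0 (by omega)).1.2.2.2.2
  · intro J hJ
    rcases Nat.lt_or_ge m J with h | h
    · left; exact hun J hJ (by omega)
    · right
      have := (hR J (by omega)).1
      exact ⟨this.1, this.2.1⟩

lemma sum_cons (k : ℕ) (F : (Fin (k + 1) → Bool) → ℂ) :
    ∑ ε, F ε = ∑ ε : Fin k → Bool, F (Fin.cons true ε) + ∑ ε : Fin k → Bool, F (Fin.cons false ε) := by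
  rw [← (Fin.consEquiv (fun _ => Bool)).sum_comp, Fintype.sum_prod_type, Fintype.sum_bool]
  rfl

lemma spath_zero (k : ℕ) (a : ℤ) (δ : Fin k → Bool) : spath k a δ 0 = a := by simp [spath]

lemma spath_cons (k : ℕ) (a : ℤ) (b : Bool) (δ : Fin k → Bool) (j : ℕ) :
    spath (k + 1) a (Fin.cons b δ) (j + 1) = spath k (a + sg b) δ j := by
  rw [spath, spath, Finset.sum_range_succ', dif_pos (Nat.succ_pos k)]
  have h0 : (Fin.cons b δ : Fin (k + 1) → Bool) ⟨0, Nat.succ_pos k⟩ = b := rfl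
  rw [h0, add_comm _ (sg b), ← add_assoc]
  congr 1
  refine Finset.sum_congr rfl fun i _ => ?_
  by_cases h : i < k
  · rw [dif_pos h, dif_pos (by omega)]; rfl
  · rw [dif_neg h, dif_neg (by omega)]

lemma star_sum (τ : ℂ) (r : ℝ) (u : ℂ) (d : ℤ) (k : ℕ) : ∀ (ε : Fin k → Bool) (c : ℤ),
    (∑ δ : Fin k → Bool, if (∑ j, sg (δ j)) = d - c then
      ∏ j : Fin k, psiStar τ r (u + (k : ℂ) - (((j : ℕ) + 1 : ℕ) : ℂ)) (sg (ε j))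
          (spath k c δ ((j : ℕ) + 1)) (spath k c δ (j : ℕ)) else 0) =
    G τ r u d (List.ofFn fun j => ev (ε j)) c := by
  induction k with
  | zero =>
    intro ε c
    simp only [Finset.univ_unique, Finset.sum_singleton, Finset.univ_eq_empty, Finset.sum_empty,
      Finset.prod_empty, List.ofFn_zero, G]
    refine if_congr ?_ rfl rfl
    omega
  | succ k ih =>
    intro ε c
    rw [List.ofFn_succ, G, List.length_ofFn, sum_cons]
    have main : ∀ b : Bool, (∑ δ : Fin k → Bool,
        if (∑ j, sg ((Fin.cons b δ : Fin (k + 1) → Bool) j)) = d - c then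
          ∏ j : Fin (k + 1), psiStar τ r (u + ((k + 1 : ℕ) : ℂ) - (((j : ℕ) + 1 : ℕ) : ℂ)) (sg (ε j))
          (spath (k + 1) c (Fin.cons b δ) ((j : ℕ) + 1)) (spath (k + 1) c (Fin.cons b δ) (j : ℕ)) else 0) =
        P τ r (u + k) c (sg b) (ev (ε 0)) *
          G τ r u d (List.ofFn fun j : Fin k => ev (ε j.succ)) (c + sg b) := by
      intro b
      rw [← ih (fun j => ε j.succ) (c + sg b), Finset.mul_sum]
      refine Finset.sum_congr rfl fun δ _ => ?_
      rw [mul_ite, mul_zero]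
      refine if_congr ?_ ?_ rfl
      · rw [Fin.sum_univ_succ]
        simp only [Fin.cons_zero, Fin.cons_succ]
        omega
      · rw [Fin.prod_univ_succ]
        congr 1
        · rw [← psiStar_eq]
          simp only [Fin.val_zero, spath_cons, spath_zero]
          congr 1
          push_cast; ring
        · refine Finset.prod_congr rfl fun j _ => ?_
          simp only [Fin.val_succ, spath_cons]
          congr 1
          push_cast; ring
    rw [main true, main false]
    rfl

lemma G_multi (τ : ℂ) (r : ℝ) (u : ℂ) (d : ℤ) (k : ℕ) : ∀ (w : Fin k → ℂ × ℂ) (c : ℤ),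
    G τ r u d (List.ofFn w) c = ∑ ε : Fin k → Bool,
      (∏ j, if ε j then (w j).1 else (w j).2) * G τ r u d (List.ofFn fun j => ev (ε j)) c := by
  induction k with
  | zero => intro w c; simp
  | succ k ih =>
    intro w c
    rw [sum_cons]
    have main : ∀ b : Bool, (∑ ε : Fin k → Bool,
        (∏ j, if (Fin.cons b ε : Fin (k + 1) → Bool) j then (w j).1 else (w j).2) *
          G τ r u d (List.ofFn fun j => ev ((Fin.cons b ε : Fin (k + 1) → Bool) j)) c) =
        (if b then (w 0).1 else (w 0).2) *
          G τ r u d (ev b :: List.ofFn fun j : Fin k => w j.succ) c := by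
      intro b
      simp only [List.ofFn_succ, Fin.prod_univ_succ, Fin.cons_zero, Fin.cons_succ]
      simp only [G, List.length_ofFn]
      rw [ih _ (c + 1), ih _ (c + -1)]
      simp only [Finset.mul_sum, ← Finset.sum_add_distrib]
      refine Finset.sum_congr rfl fun ε _ => ?_
      ring
    rw [main true, main false, List.ofFn_succ]
    apply G_lin <;> simp [ev]

lemma sg_true : sg true = 1 := rfl

lemma sg_false : sg false = -1 := rfl

lemma sum_sg (L : List Bool) : (L.map sg).sum = (L.count true : ℤ) - L.count false := by
  induction L with
  | nil => simp
  | cons b L ih =>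
    cases b <;> simp [ih, sg] <;> ring

lemma bool_perm (L1 L2 : List Bool) (hl : L1.length = L2.length)
    (hs : (L1.map sg).sum = (L2.map sg).sum) : L1.Perm L2 := by
  rw [sum_sg, sum_sg] at hs
  have h1 := List.count_true_add_count_false L1
  have h2 := List.count_true_add_count_false L2
  rw [List.perm_iff_count]
  intro b
  cases b <;> omega

lemma sum_sg_range (k : ℕ) : ∀ ε : Fin k → Bool, ∃ i : ℕ, i ≤ k ∧ (∑ j, sg (ε j)) = (k : ℤ) - 2 * i := by
  induction k with
  | zero => intro ε; exact ⟨0, le_refl _, by simp⟩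
  | succ k ih =>
    intro ε
    obtain ⟨i, hi, h⟩ := ih (fun j => ε j.succ)
    rw [Fin.sum_univ_succ, h]
    cases hb : ε 0
    · exact ⟨i + 1, by omega, by rw [sg_false]; push_cast; ring⟩
    · exact ⟨i, by omega, by rw [sg_true]; push_cast; ring⟩

lemma sum_thresh (k : ℕ) : ∀ p : ℕ, p ≤ k →
    (∑ j : Fin k, sg (decide ((j : ℕ) + 1 ≤ p))) = 2 * (p : ℤ) - k := by
  induction k with
  | zero => intro p hp; simp; omega
  | succ k ih =>
    intro p hp
    rw [Fin.sum_univ_castSucc]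
    simp only [Fin.val_castSucc, Fin.val_last]
    rcases Nat.lt_or_ge p (k + 1) with h | h
    · rw [ih p (by omega), decide_eq_false (by omega), sg_false]
      push_cast; ring
    · obtain rfl : p = k + 1 := by omega
      rw [decide_eq_true (le_refl _)]
      have : ∀ j : Fin k, decide ((j : ℕ) + 1 ≤ k + 1) = decide ((j : ℕ) + 1 ≤ k) := by
        intro j
        have := j.2
        rw [decide_eq_true (by omega), decide_eq_true (by omega)]
      simp only [this]
      rw [ih k (le_refl _), sg_true]
      push_cast; ring

lemma psiStarF_eq {τ : ℂ} (hτ : 0 < τ.im) {r : ℝ} (hr : 0 < r) (u : ℂ) (k i m : ℕ) (hi : i ≤ k)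
    (hm : m ≤ k) (c d : ℤ) (hcd : c - d = (k : ℤ) - 2 * m)
    (hc : ∀ s : ℤ, |s - c| ≤ (k : ℤ) → br τ r (s : ℂ) ≠ 0)
    (ε : Fin k → Bool) (hε : (∑ j, sg (ε j)) = (k : ℤ) - 2 * i) :
    psiStarF τ r k ((k : ℤ) - 2 * (i : ℤ)) u d c = G τ r u d (List.ofFn fun j => ev (ε j)) c := by
  have hadm : adm k c d := by unfold adm; omega
  rw [psiStarF, if_pos hadm, Finset.sum_filter]
  have h1 : ∀ j : Fin k, (if (((j : ℕ) + 1 : ℤ)) ≤ ((k : ℤ) + ((k : ℤ) - 2 * i)) / 2 then (1 : ℤ) else -1) =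
      sg (decide ((j : ℕ) + 1 ≤ k - i)) := by
    intro j
    simp only [sg, decide_eq_true_eq]
    refine if_congr ?_ rfl rfl
    omega
  simp only [h1]
  rw [star_sum τ r u d k (fun j => decide ((j : ℕ) + 1 ≤ k - i)) c]
  apply G_perm hτ hr
  · have e : ∀ f : Fin k → Bool, (List.ofFn fun j => ev (f j)) = (List.ofFn f).map ev := by
      intro f; rw [List.map_ofFn]; rfl
    rw [e ε, e (fun j => decide ((j : ℕ) + 1 ≤ k - i))]
    apply List.Perm.map
    apply bool_perm
    · simp
    · rw [List.map_ofFn, List.map_ofFn, List.sum_ofFn, List.sum_ofFn]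
      simp only [Function.comp]
      rw [hε, sum_thresh k (k - i) (by omega)]
      omega
  · intro s hs; apply hc; simpa using hs

lemma lhs_eq {τ : ℂ} (hτ : 0 < τ.im) {r : ℝ} (hr : 0 < r) (u : ℂ) (k n m : ℕ) (hn : n ≤ k)
    (hm : m ≤ k) (a b c d : ℤ) (hab : a - b = (k : ℤ) - 2 * n) (hcd : c - d = (k : ℤ) - 2 * m)
    (hc : ∀ s : ℤ, |s - c| ≤ (k : ℤ) → br τ r (s : ℂ) ≠ 0) :
    ∑ i ∈ Finset.range (k + 1),
        psiStarF τ r k ((k : ℤ) - 2 * (i : ℤ)) u d c *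
          psiF τ r k ((k : ℤ) - 2 * (i : ℤ)) u a b =
      G τ r u d (Bk τ r n ((-u + a - k + 1) / 2) ++ Bk τ r (k - n) ((-u - a - k + 1) / 2)) c := by
  have hadm : adm k a b := by unfold adm; omega
  let x : Fin k → ℂ := fun j => if (j : ℕ) < n then (-u + a - k + 1) / 2 + (j : ℕ)
    else (-u - a - k + 1) / 2 + ((j : ℕ) - n : ℕ)
  let w : Fin k → ℂ × ℂ := fun j => lv τ r (x j)
  have hlist : Bk τ r n ((-u + a - k + 1) / 2) ++ Bk τ r (k - n) ((-u - a - k + 1) / 2) =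
      List.ofFn w := by
    apply List.ext_getElem
    · rw [List.length_append, Bk_length, Bk_length, List.length_ofFn]; omega
    · intro i h1 h2
      rw [List.getElem_ofFn, List.getElem_append]
      simp only [Bk_length, w, x]
      split_ifs with h
      · rw [Bk_get]
      · rw [Bk_get]
  have hdiv : ((k : ℤ) - (a - b)) / 2 = n := by omega
  have hpsi : ∀ (j : Fin k) (e : Bool), psi τ r (u + (k : ℂ) - (((j : ℕ) + 1 : ℕ) : ℂ)) (sg e)
      (cpathZ a n (j : ℕ)) (cpathZ a n ((j : ℕ) + 1)) = if e then (w j).1 else (w j).2 := by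
    intro j e
    have hx : lv τ r (((((cpathZ a n (j : ℕ) : ℤ) : ℂ) - (cpathZ a n ((j : ℕ) + 1) : ℤ)) *
        (u + (k : ℂ) - (((j : ℕ) + 1 : ℕ) : ℂ)) + (cpathZ a n (j : ℕ) : ℤ)) / 2) = w j := by
      simp only [w, x]
      by_cases h : (j : ℕ) < n
      · rw [if_pos h, cpathZ, cpathZ, if_pos (by omega), if_pos (by push_cast; omega)]
        congr 1
        push_cast
        ring
      · rw [if_neg h, ← lv_neg hτ]
        have e1 : cpathZ a n (j : ℕ) = a + 2 * n - (j : ℕ) := by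
          rw [cpathZ]; split_ifs <;> omega
        have e2 : cpathZ a n ((j : ℕ) + 1) = a + 2 * n - (j : ℕ) - 1 := by
          rw [cpathZ, if_neg (by push_cast; omega)]; push_cast; ring
        rw [e1, e2]
        congr 1
        push_cast [Nat.le_of_not_lt h]
        ring
    rw [← hx]
    cases e
    · simp [sg, lv, psi_neg_one]
    · simp [sg, lv, psi_one]
  rw [hlist, G_multi]
  have hterm : ∀ i ∈ Finset.range (k + 1), psiStarF τ r k ((k : ℤ) - 2 * (i : ℤ)) u d c *
          psiF τ r k ((k : ℤ) - 2 * (i : ℤ)) u a b = ∑ ε : Fin k → Bool,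
        if (∑ j, sg (ε j)) = (k : ℤ) - 2 * i then
      (∏ j, if ε j then (w j).1 else (w j).2) * G τ r u d (List.ofFn fun j => ev (ε j)) c else 0 := by
    intro i hi
    have hi' : i ≤ k := by simpa [Nat.lt_succ_iff] using hi
    rw [psiF, if_pos hadm, Finset.sum_filter, Finset.mul_sum]
    refine Finset.sum_congr rfl fun ε _ => ?_
    rw [mul_ite, mul_zero]
    by_cases h : (∑ j, sg (ε j)) = (k : ℤ) - 2 * i
    · rw [if_pos h, if_pos h, psiStarF_eq hτ hr u k i m hi' hm c d hcd hc ε h, mul_comm, hdiv]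
      congr 1
      exact Finset.prod_congr rfl fun j _ => hpsi j (ε j)
    · rw [if_neg h, if_neg h]
  rw [Finset.sum_congr rfl hterm, Finset.sum_comm]
  refine Finset.sum_congr rfl fun ε _ => ?_
  obtain ⟨i, hi, h⟩ := sum_sg_range k ε
  rw [Finset.sum_eq_single i]
  · rw [if_pos h]
  · intro i' _ hne
    rw [if_neg]
    rw [h]; omega
  · intro h'; exact absurd (Finset.mem_range.mpr (by omega)) h'

/-- Elliptic 6j-symbols via intertwining vectors. -/
theorem sixj_via_intertwiners (τ : ℂ) (r : ℝ) (hτ : 0 < τ.im) (hr : 0 < r)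
    (hirr : Irrational r) (k n m : ℕ) (hk : 1 ≤ k) (hn : n ≤ k) (hm : m ≤ k)
    (a b c d : ℤ) (hab : a - b = (k : ℤ) - 2 * n) (hcd : c - d = (k : ℤ) - 2 * m)
    (hmin : (k : ℤ) < min c d) (u : ℂ)
    (hc : ∀ s : ℤ, |s - c| ≤ (k : ℤ) → br τ r (s : ℂ) ≠ 0)
    (hu : ∀ j : ℕ, j < k → br τ r (u + (j : ℂ)) ≠ 0)
    (hR : RdenomNZ τ r k n m ((-u - (a : ℂ) - (k : ℂ) + 1) / 2)
      ((-u + (c : ℂ) - (k : ℂ) + 1) / 2) ((-u - (c : ℂ) - (k : ℂ) + 1) / 2)) :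
    ∑ i ∈ Finset.range (k + 1),
        psiStarF τ r k ((k : ℤ) - 2 * (i : ℤ)) u d c *
          psiF τ r k ((k : ℤ) - 2 * (i : ℤ)) u a b =
      Rnm τ r k n m ((-u + (a : ℂ) - (k : ℂ) + 1) / 2) ((-u - (a : ℂ) - (k : ℂ) + 1) / 2)
        ((-u + (c : ℂ) - (k : ℂ) + 1) / 2) ((-u - (c : ℂ) - (k : ℂ) + 1) / 2) := by
  rw [lhs_eq hτ hr u k n m hn hm a b c d hab hcd hc]
  exact G_eq_R hτ hr u k n m hn hm c d hcd _ _ _ _ hc hu rfl rfl hR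

end Ell
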